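/- arXiv:1712.09880 — 5 statements merged into one kernel-verified Lean document; each statement's English description precedes it below -/
import Mathlib

section
/- For every η > 0, n, m ∈ ℕ, and x, y ∈ ℝ, one has the absolutely convergent expansion ∫_ℝ e^{i η ξ y} H_{m,η}(ξ + x) H_{n,η}(ξ) dξ = ∑_{ℓ₁=0}^∞ ∑_{ℓ₂=0}^∞ η^{(ℓ₁+ℓ₂)/2} (iy)^{ℓ₁} x^{ℓ₂} / (ℓ₁! ℓ₂!) · ∫_ℝ ξ^{ℓ₁} H_m^{(ℓ₂)}(ξ) H_n(ξ) dξ, where H_m^{(ℓ₂)} denotes the ℓ₂-th derivative of H_m. -/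
open Complex

/-- The Hermite functions: `H 0 = π^{-1/4} e^{-x²/2}` and `H n = (2^n n!)^{-1/2} (-d/dx + x)^n H 0`. -/
noncomputable def hermiteFun (n : ℕ) : ℝ → ℝ := fun x =>
  ((2 ^ n * n.factorial : ℝ) ^ (-(1 : ℝ) / 2)) *
    ((fun f : ℝ → ℝ => fun t => -deriv f t + t * f t)^[n]
      (fun t => Real.pi ^ (-(1 : ℝ) / 4) * Real.exp (-(t ^ 2) / 2))) x

/-- The rescaled Hermite function `H_{n,η}(x) = η^{1/4} H_n(η^{1/2} x)`. -/
noncomputable def hermiteScaled (n : ℕ) (η : ℝ) : ℝ → ℝ := fun x =>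
  η ^ ((1 : ℝ) / 4) * hermiteFun n (η ^ ((1 : ℝ) / 2) * x)

/-! Expand `e^{at}` in powers of `a` and `F(t + b)` in its Taylor series at `t`. By Cauchy's estimate
on the circle of radius `r > |b|` about `t`, where `|F| ≤ M t`, the term of index `(j, k)` is at most
`(|a||t|)^j / j! · (|b|/r)^k · M t`. These majorants sum to `e^{|a||t|} (1 - |b|/r)⁻¹ M t`, so dominated
convergence integrates the double series term by term against any `g` for which `M t e^{|a||t|} g` is
integrable. A Hermite function is a polynomial times `e^{-t²/2}`: it extends to an entire function
bounded on horizontal strips, and it has exponential moments of every order. The parameter `η` is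
removed by the substitution `ξ ↦ η^{1/2} ξ`. -/

open MeasureTheory Polynomial Metric
open scoped Nat

theorem hasSum_exp_mul {𝕜 ι : Type*} [RCLike 𝕜] {f : ι → 𝕜} {s : 𝕜} (hf : HasSum f s) (w : 𝕜) :
    HasSum (fun k : ℕ × ι => w ^ k.1 / k.1 ! * f k.2) (NormedSpace.exp w * s) := by
  have hexp : HasSum (fun j : ℕ => w ^ j / (j ! : 𝕜)) (NormedSpace.exp w) :=
    NormedSpace.expSeries_div_hasSum_exp w
  have hsummable := summable_mul_of_summable_norm hexp.summable.norm hf.summable.norm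
  simpa only using hexp.mul hf hsummable

section EntireFunctions

variable {F : ℂ → ℂ}

theorem iteratedDeriv_ofReal_of_entire {f : ℝ → ℝ} (hF : Differentiable ℂ F)
    (hFf : ∀ t : ℝ, F t = f t) (k : ℕ) (t : ℝ) :
    iteratedDeriv k F t = ((iteratedDeriv k f t : ℝ) : ℂ) := by
  induction k generalizing t with
  | zero => simpa using hFf t
  | succ k ih =>
    have hd : HasDerivAt (iteratedDeriv k F) (iteratedDeriv (k + 1) F t) t := by
      rw [iteratedDeriv_succ]
      exact (hF.contDiff.differentiable_iteratedDeriv k (WithTop.coe_lt_top _) t).hasDerivAt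
    have hre : HasDerivAt (iteratedDeriv k f) (iteratedDeriv (k + 1) F t).re t := by
      simpa only [ih, ofReal_re] using hd.real_of_complex
    have hofReal : HasDerivAt (fun s : ℝ => ((iteratedDeriv k f s : ℝ) : ℂ))
        (iteratedDeriv (k + 1) F t) t := by
      simpa only [ih] using hd.comp_ofReal
    rw [iteratedDeriv_succ (f := f), hre.deriv]
    exact hofReal.unique hre.ofReal_comp

theorem hasSum_cexp_mul_taylorSeries_of_entire (hF : Differentiable ℂ F) (w z b : ℂ) :
    HasSum (fun k : ℕ × ℕ =>
        w ^ k.1 / k.1 ! * (b ^ k.2 / k.2 ! * iteratedDeriv k.2 F z))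
      (Complex.exp w * F (z + b)) := by
  have htaylor : HasSum (fun k : ℕ => b ^ k / k ! * iteratedDeriv k F z) (F (z + b)) := by
    refine (hasSum_taylorSeries_of_entire hF z (z + b)).congr_fun fun k => ?_
    simp only [add_sub_cancel_left, smul_eq_mul]
    ring
  rw [Complex.exp_eq_exp_ℂ]
  exact hasSum_exp_mul htaylor w

theorem norm_taylorSeries_term_le {z b : ℂ} {r M : ℝ} (hr : 0 < r)
    (hF : DiffContOnCl ℂ F (ball z r)) (hM : ∀ w ∈ sphere z r, ‖F w‖ ≤ M) (k : ℕ) :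
    ‖b ^ k / k ! * iteratedDeriv k F z‖ ≤ (‖b‖ / r) ^ k * M := by
  calc ‖b ^ k / k ! * iteratedDeriv k F z‖ = ‖b‖ ^ k / k ! * ‖iteratedDeriv k F z‖ := by simp
    _ ≤ ‖b‖ ^ k / k ! * (k ! * M / r ^ k) := by
      gcongr
      exact norm_iteratedDeriv_le_of_forall_mem_sphere_norm_le k hr hF hM
    _ = (‖b‖ / r) ^ k * M := by
      rw [div_pow]
      field_simp

theorem hasSum_integral_cexp_mul_entire_comp_add {μ : Measure ℝ} {g : ℝ → ℂ} {M : ℝ → ℝ} {a b : ℂ}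
    {r : ℝ} (hF : Differentiable ℂ F) (hg : AEStronglyMeasurable g μ) (hb : ‖b‖ < r)
    (hM : ∀ t : ℝ, ∀ z ∈ sphere (t : ℂ) r, ‖F z‖ ≤ M t)
    (hint : Integrable (fun t => M t * (Real.exp (‖a‖ * |t|) * ‖g t‖)) μ) :
    HasSum (fun k : ℕ × ℕ => a ^ k.1 * b ^ k.2 / (k.1 ! * k.2 !) *
        ∫ t : ℝ, (t : ℂ) ^ k.1 * iteratedDeriv k.2 F t * g t ∂μ)
      (∫ t : ℝ, Complex.exp (a * t) * F (t + b) * g t ∂μ) := by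
  have hr : 0 < r := (norm_nonneg b).trans_lt hb
  let majorant (k : ℕ × ℕ) (t : ℝ) : ℝ :=
    (‖a‖ * |t|) ^ k.1 / k.1 ! * (‖b‖ / r) ^ k.2 * (M t * ‖g t‖)
  have hmajorant (t : ℝ) : HasSum (majorant · t)
      (Real.exp (‖a‖ * |t|) * (1 - ‖b‖ / r)⁻¹ * (M t * ‖g t‖)) := by
    have hgeom := hasSum_geometric_of_lt_one (by positivity) ((div_lt_one hr).2 hb)
    rw [Real.exp_eq_exp_ℝ]
    exact (hasSum_exp_mul hgeom _).mul_right _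
  have hterm (k : ℕ × ℕ) (t : ℝ) :
      ‖(a * t) ^ k.1 / k.1 ! * (b ^ k.2 / k.2 ! * iteratedDeriv k.2 F t) * g t‖ ≤
        majorant k t := by
    calc _ = (‖a‖ * |t|) ^ k.1 / k.1 ! * ‖b ^ k.2 / k.2 ! * iteratedDeriv k.2 F t‖ * ‖g t‖ := by
          simp
      _ ≤ (‖a‖ * |t|) ^ k.1 / k.1 ! * ((‖b‖ / r) ^ k.2 * M t) * ‖g t‖ := by
          gcongr
          exact norm_taylorSeries_term_le hr hF.diffContOnCl (hM t) k.2
      _ = majorant k t := by ring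
  have hmeas (k : ℕ × ℕ) : AEStronglyMeasurable (fun t : ℝ =>
      (a * t) ^ k.1 / k.1 ! * (b ^ k.2 / k.2 ! * iteratedDeriv k.2 F t) * g t) μ := by
    have hcont : Continuous (iteratedDeriv k.2 F) := hF.contDiff.continuous_iteratedDeriv k.2 le_top
    exact .mul (Continuous.aestronglyMeasurable (by fun_prop)) hg
  have hmajorant_int : Integrable (fun t => ∑' k, majorant k t) μ := by
    refine (hint.const_mul (1 - ‖b‖ / r)⁻¹).congr (.of_forall fun t => ?_)
    simp only [(hmajorant t).tsum_eq]
    ring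
  have hsum := hasSum_integral_of_dominated_convergence majorant hmeas
    (fun k => .of_forall (hterm k)) (.of_forall fun t => (hmajorant t).summable) hmajorant_int
    (.of_forall fun t => (hasSum_cexp_mul_taylorSeries_of_entire hF (a * t) t b).mul_right (g t))
  refine hsum.congr_fun fun k => ?_
  rw [← integral_const_mul]
  congr 1 with t
  ring

end EntireFunctions

theorem integrable_exp_mul_abs_sub_mul_sq {b : ℝ} (hb : 0 < b) (c : ℝ) :
    Integrable fun t : ℝ => Real.exp (c * |t| - b * t ^ 2) := by
  refine ((integrable_exp_neg_mul_sq (half_pos hb)).const_mul (Real.exp (c ^ 2 / (2 * b)))).mono'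
    (by fun_prop) (.of_forall fun t => ?_)
  rw [Real.norm_of_nonneg (Real.exp_nonneg _), ← Real.exp_add, Real.exp_le_exp]
  have hsq : c ^ 2 / (2 * b) + -(b / 2) * t ^ 2 - (c * |t| - b * t ^ 2) =
      (c - b * |t|) ^ 2 / (2 * b) := by
    rw [← sq_abs t]
    field_simp
    ring
  have hnonneg : 0 ≤ (c - b * |t|) ^ 2 / (2 * b) := by positivity
  linarith

theorem exists_norm_eval_le_mul_exp_norm {R : Type*} [NormedRing R] [NormOneClass R] (p : R[X]) :
    ∃ C : ℝ, 0 ≤ C ∧ ∀ z : R, ‖p.eval z‖ ≤ C * Real.exp ‖z‖ := by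
  induction p using Polynomial.induction_on' with
  | add p q hp hq =>
    obtain ⟨C, hC, hp⟩ := hp
    obtain ⟨D, hD, hq⟩ := hq
    refine ⟨C + D, by positivity, fun z => ?_⟩
    rw [eval_add, add_mul]
    exact norm_add_le_of_le (hp z) (hq z)
  | monomial k a =>
    refine ⟨‖a‖ * k !, by positivity, fun z => ?_⟩
    calc ‖(monomial k a).eval z‖ ≤ ‖a‖ * ‖z‖ ^ k := by
          rw [eval_monomial]
          exact (norm_mul_le _ _).trans (by gcongr; exact norm_pow_le z k)
      _ = ‖a‖ * k ! * (‖z‖ ^ k / k !) := by field_simp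
      _ ≤ ‖a‖ * k ! * Real.exp ‖z‖ := by
          gcongr
          exact Real.pow_div_factorial_le_exp _ (norm_nonneg z) k

/-- The entire function `p(z) e^{-z²/2}`. Hermite functions are restrictions of such functions to
the real line. -/
noncomputable def polyGaussian (p : ℂ[X]) (z : ℂ) : ℂ :=
  p.eval z * Complex.exp (-(z ^ 2) / 2)

namespace polyGaussian

theorem differentiable (p : ℂ[X]) : Differentiable ℂ (polyGaussian p) :=
  p.differentiable.mul (by fun_prop)

theorem exists_norm_le (p : ℂ[X]) : ∃ C : ℝ, 0 ≤ C ∧ ∀ z : ℂ, ‖polyGaussian p z‖ ≤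
    C * (Real.exp (|z.im| + z.im ^ 2 / 2) * Real.exp (|z.re| - z.re ^ 2 / 2)) := by
  obtain ⟨C, hC, hp⟩ := exists_norm_eval_le_mul_exp_norm p
  refine ⟨C, hC, fun z => ?_⟩
  have hre : (-(z ^ 2) / 2).re = z.im ^ 2 / 2 - z.re ^ 2 / 2 := by
    simp [pow_two]
    ring
  calc ‖polyGaussian p z‖ = ‖p.eval z‖ * Real.exp (z.im ^ 2 / 2 - z.re ^ 2 / 2) := by
        rw [polyGaussian, norm_mul, Complex.norm_exp, hre]
    _ ≤ C * Real.exp (|z.re| + |z.im|) * Real.exp (z.im ^ 2 / 2 - z.re ^ 2 / 2) := by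
        gcongr
        exact (hp z).trans (by gcongr; exact norm_le_abs_re_add_abs_im z)
    _ = C * (Real.exp (|z.im| + z.im ^ 2 / 2) * Real.exp (|z.re| - z.re ^ 2 / 2)) := by
        rw [mul_assoc, ← Real.exp_add, ← Real.exp_add]
        ring_nf

theorem exists_norm_le_of_abs_im_le (p : ℂ[X]) (R : ℝ) :
    ∃ C : ℝ, ∀ z : ℂ, |z.im| ≤ R → ‖polyGaussian p z‖ ≤ C := by
  obtain ⟨C, hC, hp⟩ := exists_norm_le p
  refine ⟨C * (Real.exp (R + R ^ 2 / 2) * Real.exp (1 / 2)), fun z hz => (hp z).trans ?_⟩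
  have him : z.im ^ 2 ≤ R ^ 2 := sq_le_sq' (neg_le_of_abs_le hz) (le_of_abs_le hz)
  have hre : |z.re| - z.re ^ 2 / 2 ≤ 1 / 2 := by
    rw [← sq_abs z.re]
    linarith [sq_nonneg (|z.re| - 1)]
  gcongr

theorem integrable_exp_mul_abs_mul_norm (p : ℂ[X]) (c : ℝ) :
    Integrable fun t : ℝ => Real.exp (c * |t|) * ‖polyGaussian p t‖ := by
  obtain ⟨C, -, hp⟩ := exists_norm_le p
  have hcont : Continuous (polyGaussian p) := (differentiable p).continuous
  refine ((integrable_exp_mul_abs_sub_mul_sq one_half_pos (c + 1)).const_mul C).mono'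
    (Continuous.aestronglyMeasurable (by fun_prop)) (.of_forall fun t => ?_)
  calc ‖Real.exp (c * |t|) * ‖polyGaussian p t‖‖ = Real.exp (c * |t|) * ‖polyGaussian p t‖ :=
        Real.norm_of_nonneg (by positivity)
    _ ≤ Real.exp (c * |t|) * (C * Real.exp (|t| - t ^ 2 / 2)) := by
        gcongr
        simpa using hp t
    _ = C * Real.exp ((c + 1) * |t| - 1 / 2 * t ^ 2) := by
        rw [mul_left_comm, ← Real.exp_add]
        ring_nf

theorem hasSum_integral_cexp_mul_comp_add (p q : ℂ[X]) (a b : ℂ) :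
    HasSum (fun k : ℕ × ℕ => a ^ k.1 * b ^ k.2 / (k.1 ! * k.2 !) *
        ∫ t : ℝ, (t : ℂ) ^ k.1 * iteratedDeriv k.2 (polyGaussian p) t * polyGaussian q t)
      (∫ t : ℝ, Complex.exp (a * t) * polyGaussian p (t + b) * polyGaussian q t) := by
  obtain ⟨C, hC⟩ := exists_norm_le_of_abs_im_le p (‖b‖ + 1)
  have hcont : Continuous (polyGaussian q) := (differentiable q).continuous
  refine hasSum_integral_cexp_mul_entire_comp_add (r := ‖b‖ + 1) (differentiable p)
    (Continuous.aestronglyMeasurable (by fun_prop)) (lt_add_one _) (fun t z hz => hC z ?_)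
    ((integrable_exp_mul_abs_mul_norm q ‖a‖).const_mul C)
  calc |z.im| = |(z - t).im| := by simp
    _ ≤ ‖z - t‖ := abs_im_le_norm _
    _ = ‖b‖ + 1 := mem_sphere_iff_norm.1 hz

end polyGaussian

theorem neg_deriv_add_mul_eval_mul_exp (p : ℝ[X]) (t : ℝ) :
    -deriv (fun s => p.eval s * Real.exp (-(s ^ 2) / 2)) t +
        t * (p.eval t * Real.exp (-(t ^ 2) / 2)) =
      (2 * X * p - derivative p).eval t * Real.exp (-(t ^ 2) / 2) := by
  have hquad : HasDerivAt (fun s : ℝ => -(s ^ 2) / 2) (-t) t := by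
    simpa [neg_div] using ((hasDerivAt_pow 2 t).neg).div_const 2
  rw [((p.hasDerivAt t).fun_mul hquad.exp).deriv]
  simp only [eval_sub, eval_mul, eval_X, eval_ofNat]
  ring

theorem exists_hermiteFun_eq_eval_mul_exp (n : ℕ) :
    ∃ p : ℝ[X], ∀ t, hermiteFun n t = p.eval t * Real.exp (-(t ^ 2) / 2) := by
  suffices h : ∃ p : ℝ[X], (fun f : ℝ → ℝ => fun t => -deriv f t + t * f t)^[n]
      (fun t => Real.pi ^ (-(1 : ℝ) / 4) * Real.exp (-(t ^ 2) / 2)) =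
      fun t => p.eval t * Real.exp (-(t ^ 2) / 2) by
    obtain ⟨p, hp⟩ := h
    refine ⟨C ((2 ^ n * n.factorial : ℝ) ^ (-(1 : ℝ) / 2)) * p, fun t => ?_⟩
    rw [hermiteFun, hp, eval_C_mul, mul_assoc]
  induction n with
  | zero => exact ⟨C (Real.pi ^ (-(1 : ℝ) / 4)), by simp⟩
  | succ n ih =>
    obtain ⟨p, hp⟩ := ih
    refine ⟨2 * X * p - derivative p, ?_⟩
    rw [Function.iterate_succ_apply', hp]
    exact funext (neg_deriv_add_mul_eval_mul_exp p)

theorem exists_polyGaussian_eq_hermiteFun (n : ℕ) :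
    ∃ p : ℂ[X], ∀ t : ℝ, polyGaussian p t = hermiteFun n t := by
  obtain ⟨p, hp⟩ := exists_hermiteFun_eq_eval_mul_exp n
  refine ⟨p.map ofRealHom, fun t => ?_⟩
  have heval : (p.map ofRealHom).eval (t : ℂ) = p.eval t := eval_map_apply ofRealHom t
  rw [polyGaussian, heval, hp]
  push_cast
  rfl

theorem hasSum_integral_cexp_mul_hermiteFun_add (m n : ℕ) (a : ℂ) (b : ℝ) :
    HasSum (fun k : ℕ × ℕ => a ^ k.1 * (b : ℂ) ^ k.2 / (k.1 ! * k.2 !) *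
        ((∫ ξ : ℝ, ξ ^ k.1 * iteratedDeriv k.2 (hermiteFun m) ξ * hermiteFun n ξ : ℝ) : ℂ))
      (∫ ξ : ℝ, Complex.exp (a * ξ) * (hermiteFun m (ξ + b) : ℂ) * (hermiteFun n ξ : ℂ)) := by
  obtain ⟨p, hp⟩ := exists_polyGaussian_eq_hermiteFun m
  obtain ⟨q, hq⟩ := exists_polyGaussian_eq_hermiteFun n
  have hsum := polyGaussian.hasSum_integral_cexp_mul_comp_add p q a b
  simp only [iteratedDeriv_ofReal_of_entire (polyGaussian.differentiable p) hp, hq,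
    ← ofReal_add, hp] at hsum
  simpa only [← integral_complex_ofReal, ofReal_mul, ofReal_pow] using hsum

theorem rpow_natCast_add_div_two {η : ℝ} (hη : 0 ≤ η) (j k : ℕ) :
    η ^ (((j : ℝ) + k) / 2) = (η ^ ((1 : ℝ) / 2)) ^ j * (η ^ ((1 : ℝ) / 2)) ^ k := by
  rw [← pow_add, ← Real.rpow_mul_natCast hη]
  push_cast
  ring_nf

theorem integral_cexp_mul_hermiteScaled_add {η : ℝ} (hη : 0 < η) (m n : ℕ) (x : ℝ) (y : ℂ) :
    (∫ ξ : ℝ, Complex.exp (I * η * ξ * y) *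
        (hermiteScaled m η (ξ + x) : ℂ) * (hermiteScaled n η ξ : ℂ)) =
      ∫ ξ : ℝ, Complex.exp ((η ^ ((1 : ℝ) / 2) : ℝ) * (I * y) * ξ) *
        (hermiteFun m (ξ + η ^ ((1 : ℝ) / 2) * x) : ℂ) * (hermiteFun n ξ : ℂ) := by
  set s : ℝ := η ^ ((1 : ℝ) / 2) with hs
  have hs₀ : 0 < s := by positivity
  have hη_eq : η = s * s := by
    rw [hs, ← Real.rpow_add hη]
    norm_num
  have hs_eq : s = η ^ ((1 : ℝ) / 4) * η ^ ((1 : ℝ) / 4) := by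
    rw [hs, ← Real.rpow_add hη]
    norm_num
  let G (ξ : ℝ) : ℂ :=
    Complex.exp (s * (I * y) * ξ) * (hermiteFun m (ξ + s * x) : ℂ) * (hermiteFun n ξ : ℂ)
  have hG (ξ : ℝ) : Complex.exp (I * η * ξ * y) *
      (hermiteScaled m η (ξ + x) : ℂ) * (hermiteScaled n η ξ : ℂ) = s • G (s * ξ) := by
    have hexp : I * η * ξ * y = s * (I * y) * (s * ξ : ℝ) := by
      rw [hη_eq]
      push_cast
      ring
    have hnorm : (s : ℂ) = (η ^ ((1 : ℝ) / 4) : ℝ) * (η ^ ((1 : ℝ) / 4) : ℝ) := by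
      exact_mod_cast hs_eq
    simp only [hermiteScaled, G, ← hs, hexp, mul_add, real_smul, ofReal_mul]
    rw [hnorm]
    ring
  simp only [hG]
  rw [integral_smul, Measure.integral_comp_mul_left, smul_smul, abs_of_pos (inv_pos.2 hs₀),
    mul_inv_cancel₀ hs₀.ne', one_smul]

theorem kernel_series_expansion_general (η : ℝ) (hη : 0 < η) (n m : ℕ) (x : ℝ) (y : ℂ) :
    Summable (fun ℓ : ℕ × ℕ =>
      ‖((η ^ (((ℓ.1 : ℝ) + ℓ.2) / 2) : ℝ) : ℂ) * (I * y) ^ ℓ.1 * (x : ℂ) ^ ℓ.2 /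
          ((ℓ.1.factorial : ℂ) * ℓ.2.factorial) *
        ((∫ ξ : ℝ, ξ ^ ℓ.1 * iteratedDeriv ℓ.2 (hermiteFun m) ξ * hermiteFun n ξ : ℝ) : ℂ)‖) ∧
    (∫ ξ : ℝ, Complex.exp (I * η * ξ * y) *
        (hermiteScaled m η (ξ + x) : ℂ) * (hermiteScaled n η ξ : ℂ)) =
      ∑' ℓ : ℕ × ℕ,
        ((η ^ (((ℓ.1 : ℝ) + ℓ.2) / 2) : ℝ) : ℂ) * (I * y) ^ ℓ.1 * (x : ℂ) ^ ℓ.2 /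
            ((ℓ.1.factorial : ℂ) * ℓ.2.factorial) *
          ((∫ ξ : ℝ, ξ ^ ℓ.1 * iteratedDeriv ℓ.2 (hermiteFun m) ξ * hermiteFun n ξ : ℝ) : ℂ) := by
  set s : ℝ := η ^ ((1 : ℝ) / 2)
  have hcoeff (k : ℕ × ℕ) :
      ((η ^ (((k.1 : ℝ) + k.2) / 2) : ℝ) : ℂ) * (I * y) ^ k.1 * (x : ℂ) ^ k.2 =
        (s * (I * y)) ^ k.1 * ((s * x : ℝ) : ℂ) ^ k.2 := by
    rw [rpow_natCast_add_div_two hη.le]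
    push_cast
    ring
  have hsum := hasSum_integral_cexp_mul_hermiteFun_add m n (s * (I * y)) (s * x)
  rw [integral_cexp_mul_hermiteScaled_add hη]
  simp only [hcoeff]
  exact ⟨hsum.summable.norm, hsum.tsum_eq.symm⟩

/-- Absolutely convergent double-series expansion of
`∫ e^{iηξy} H_{m,η}(ξ+x) H_{n,η}(ξ) dξ`. -/
theorem kernel_series_expansion (η : ℝ) (hη : 0 < η) (n m : ℕ) (x y : ℝ) :
    Summable (fun ℓ : ℕ × ℕ =>
      ‖((η ^ (((ℓ.1 : ℝ) + ℓ.2) / 2) : ℝ) : ℂ) * (I * y) ^ ℓ.1 * (x : ℂ) ^ ℓ.2 /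
          ((ℓ.1.factorial : ℂ) * ℓ.2.factorial) *
        ((∫ ξ : ℝ, ξ ^ ℓ.1 * iteratedDeriv ℓ.2 (hermiteFun m) ξ * hermiteFun n ξ : ℝ) : ℂ)‖) ∧
    (∫ ξ : ℝ, Complex.exp (I * η * ξ * y) *
        (hermiteScaled m η (ξ + x) : ℂ) * (hermiteScaled n η ξ : ℂ)) =
      ∑' ℓ : ℕ × ℕ,
        ((η ^ (((ℓ.1 : ℝ) + ℓ.2) / 2) : ℝ) : ℂ) * (I * y) ^ ℓ.1 * (x : ℂ) ^ ℓ.2 /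
            ((ℓ.1.factorial : ℂ) * ℓ.2.factorial) *
          ((∫ ξ : ℝ, ξ ^ ℓ.1 * iteratedDeriv ℓ.2 (hermiteFun m) ξ * hermiteFun n ξ : ℝ) : ℂ) :=
  kernel_series_expansion_general η hη n m x y
end

section
/- Let ℓ ∈ ℕ, a ≥ 0, ε ∈ {+1, −1}, and let (ε_q)_{q∈ℕ} be a sequence of positive reals and (n_q)_{q∈ℕ} a sequence of natural numbers such that ε_q → 0 and ε_q n_q → a/2 as q → ∞. Define the operators A f := f' + x f and C f := −f' + x f on smooth functions (so that ((A + C)/2)^ℓ f = x^ℓ f and ((A − C)/2)^ℓ f = f^{(ℓ)}). Then ‖ ε_q^{ℓ/2} ((A + εC)/2)^ℓ H_{n_q} − (a/4)^{ℓ/2} ∑_{ℓ'=0}^{ℓ} ε^{ℓ'} C(ℓ,ℓ') H_{n_q + 2ℓ' − ℓ} ‖_{L²(ℝ)} → 0 as q → ∞, with the convention H_k := 0 for k < 0. -/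
open Filter

/-- Hermite functions indexed by `ℤ`, with the convention `H_k = 0` for `k < 0`. -/
noncomputable def hermiteZ (k : ℤ) : ℝ → ℝ :=
  if 0 ≤ k then hermiteFun k.toNat else 0

open MeasureTheory Polynomial Topology

/-!
The operator `T = (A + ε C) / 2` acts on the Hermite functions by
`T H_k = √(k/2) H_{k-1} + ε √((k+1)/2) H_{k+1}`. Multiplied by `√ε_q`, both weights tend to
`√(a/4)` at every index within bounded distance of `n_q`. Hence `ε_q^{ℓ/2} T^ℓ H_{n_q}` differs by
a vanishing amount from `(a/4)^{ℓ/2}` times the `ℓ`-th iterate of the constant-coefficient operator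
`H_k ↦ H_{k-1} + ε H_{k+1}`, which the binomial formula expands. The induction on `ℓ` is run for
all sequences `n_q` at once, so that it may be applied to `n_q - 1` and `n_q + 1`; the errors stay
small because the norms of the `H_k` are bounded.

Dividing every function by the Gaussian `exp (-x²/2)` turns `A` and `C` into the operators `d/dx`
and `2x - d/dx` on polynomials, where the ladder relations are algebra.
-/

section Ladder

lemma tendsto_seminorm_smul_sub_smul {𝕜 V ι : Type*} [NormedField 𝕜] [AddCommGroup V]
    [Module 𝕜 V] (p : Seminorm 𝕜 V) {L : Filter ι} {c : ι → 𝕜} {c₀ : 𝕜} {u v : ι → V} {B : ℝ}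
    (hc : Tendsto c L (𝓝 c₀)) (huv : Tendsto (fun q => p (u q - v q)) L (𝓝 0))
    (hv : ∀ q, p (v q) ≤ B) :
    Tendsto (fun q => p (c q • u q - c₀ • v q)) L (𝓝 0) := by
  have hlim : Tendsto (fun q => ‖c q‖ * p (u q - v q) + ‖c q - c₀‖ * B) L (𝓝 0) := by
    simpa using (hc.norm.mul huv).add ((tendsto_iff_norm_sub_tendsto_zero.1 hc).mul_const B)
  refine squeeze_zero (fun q => apply_nonneg p _) (fun q => ?_) hlim
  calc p (c q • u q - c₀ • v q)
      = p (c q • (u q - v q) + (c q - c₀) • v q) := by congr 1; module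
    _ ≤ ‖c q‖ * p (u q - v q) + ‖c q - c₀‖ * p (v q) := by
        simpa only [map_smul_eq_mul] using map_add_le_add p (c q • (u q - v q)) ((c q - c₀) • v q)
    _ ≤ ‖c q‖ * p (u q - v q) + ‖c q - c₀‖ * B := by gcongr; exact hv q

variable {V : Type*} [AddCommGroup V] [Module ℝ V]

/-- The value at `k` of `(S⁻¹ + ε S)^ℓ h`, where `S` is the shift `(S h) k = h (k + 1)` of
`ℤ`-indexed families, written out by the binomial formula. -/
def binomialShift (h : ℤ → V) (ε : ℝ) (ℓ : ℕ) (k : ℤ) : V :=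
  ∑ i ∈ Finset.range (ℓ + 1), (ε ^ i * ℓ.choose i) • h (k + 2 * i - ℓ)

lemma binomialShift_succ (h : ℤ → V) (ε : ℝ) (ℓ : ℕ) (k : ℤ) :
    binomialShift h ε (ℓ + 1) k =
      binomialShift h ε ℓ (k - 1) + ε • binomialShift h ε ℓ (k + 1) := by
  have pascal := Finset.sum_choose_succ_nsmul (fun i _ => ε ^ i • h (k + 2 * i - (ℓ + 1))) ℓ
  simp only [← Nat.cast_smul_eq_nsmul ℝ, smul_smul] at pascal
  simp only [binomialShift, Finset.smul_sum, smul_smul]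
  push_cast at pascal ⊢
  convert pascal using 2
  · simp only [mul_comm]
  · refine Finset.sum_congr rfl fun i _ => ?_
    congr 1 <;> ring_nf
  · refine Finset.sum_congr rfl fun i _ => ?_
    congr 1 <;> ring_nf

lemma seminorm_binomialShift_le (p : Seminorm ℝ V) {h : ℤ → V} {M : ℝ}
    (hM : ∀ k, p (h k) ≤ M) (ε : ℝ) (ℓ : ℕ) (k : ℤ) :
    p (binomialShift h ε ℓ k) ≤ (1 + |ε|) ^ ℓ * M := by
  induction ℓ generalizing k with
  | zero => simpa [binomialShift] using hM k
  | succ ℓ ih =>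
    calc p (binomialShift h ε (ℓ + 1) k)
        ≤ p (binomialShift h ε ℓ (k - 1)) + |ε| * p (binomialShift h ε ℓ (k + 1)) := by
          rw [binomialShift_succ, ← Real.norm_eq_abs, ← map_smul_eq_mul]
          exact map_add_le_add p _ _
      _ ≤ (1 + |ε|) ^ ℓ * M + |ε| * ((1 + |ε|) ^ ℓ * M) := by gcongr <;> apply ih
      _ = (1 + |ε|) ^ (ℓ + 1) * M := by ring

lemma tendsto_sqrt_mul_sqrt_half {ι : Type*} {L : Filter ι} {s n : ι → ℝ} {a : ℝ}
    (hs : ∀ q, 0 ≤ s q) (hsn : Tendsto (fun q => s q * n q) L (𝓝 (a / 2))) :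
    Tendsto (fun q => √(s q) * √(n q / 2)) L (𝓝 √(a / 4)) := by
  have hlim := (hsn.div_const 2).sqrt
  rw [show a / 2 / 2 = a / 4 by ring] at hlim
  refine hlim.congr fun q => ?_
  rw [mul_div_assoc, Real.sqrt_mul (hs q)]

theorem tendsto_seminorm_ladder_pow_sub_binomialShift {ι : Type*} {L : Filter ι} {s : ι → ℝ}
    {n : ι → ℤ} {h : ℤ → V} {a ε M : ℝ} (p : Seminorm ℝ V) (T : Module.End ℝ V)
    (hM : ∀ k, p (h k) ≤ M) (hT : ∀ k : ℤ, T (h k) =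
      √((k : ℝ) / 2) • h (k - 1) + ε • √(((k : ℝ) + 1) / 2) • h (k + 1))
    (hs : ∀ q, 0 ≤ s q) (hs₀ : Tendsto s L (𝓝 0))
    (hsn : Tendsto (fun q => s q * n q) L (𝓝 (a / 2))) (ℓ : ℕ) :
    Tendsto (fun q => p (√(s q) ^ ℓ • (T ^ ℓ) (h (n q)) -
      √(a / 4) ^ ℓ • binomialShift h ε ℓ (n q))) L (𝓝 0) := by
  induction ℓ generalizing n with
  | zero => simp [binomialShift, tendsto_const_nhds]
  | succ ℓ ih =>
    have hsn_add (c : ℝ) : Tendsto (fun q => s q * (n q + c)) L (𝓝 (a / 2)) := by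
      simpa [mul_add] using hsn.add (hs₀.mul_const c)
    have hbound (k : ℤ) :
        p (√(a / 4) ^ ℓ • binomialShift h ε ℓ k) ≤ √(a / 4) ^ ℓ * ((1 + |ε|) ^ ℓ * M) := by
      rw [map_smul_eq_mul, Real.norm_of_nonneg (by positivity)]
      gcongr
      exact seminorm_binomialShift_le p hM ε ℓ k
    have lower := tendsto_seminorm_smul_sub_smul p (tendsto_sqrt_mul_sqrt_half hs hsn)
      (ih (n := fun q => n q - 1) (by simpa [sub_eq_add_neg] using hsn_add (-1)))
      fun q => hbound (n q - 1)
    have raise := tendsto_seminorm_smul_sub_smul p (tendsto_sqrt_mul_sqrt_half hs (hsn_add 1))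
      (ih (n := fun q => n q + 1) (by simpa using hsn_add 1)) fun q => hbound (n q + 1)
    have hlim := lower.add (raise.const_mul ‖ε‖)
    rw [mul_zero, add_zero] at hlim
    refine squeeze_zero (fun q => apply_nonneg p _) (fun q => ?_) hlim
    rw [← map_smul_eq_mul]
    refine le_of_eq_of_le (congrArg p ?_) (map_add_le_add p _ _)
    rw [pow_succ T, Module.End.mul_apply, hT, map_add, map_smul, map_smul, map_smul,
      binomialShift_succ]
    module

end Ladder

section HermitePolynomial

/-- The operator `-d/dx + x` conjugated by the Gaussian `exp (-x²/2)`, acting on polynomials; its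
iterates on `1` are the physicists' Hermite polynomials. The conjugate of `d/dx + x` is
`derivative`. -/
noncomputable def hermiteRaising : Module.End ℝ ℝ[X] :=
  LinearMap.mulLeft ℝ (2 * X) - derivative

lemma hermiteRaising_apply (p : ℝ[X]) : hermiteRaising p = 2 * X * p - derivative p := rfl

lemma hermiteRaising_mul (p r : ℝ[X]) :
    hermiteRaising (p * r) = hermiteRaising p * r - p * derivative r := by
  simp only [hermiteRaising_apply, derivative_mul]
  ring

lemma derivative_hermiteRaising (p : ℝ[X]) :
    derivative (hermiteRaising p) = hermiteRaising (derivative p) + 2 * p := by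
  simp only [hermiteRaising_apply, derivative_sub, derivative_mul, derivative_ofNat, derivative_X]
  ring

lemma derivative_hermiteRaising_pow_succ_one (n : ℕ) :
    derivative ((hermiteRaising ^ (n + 1)) 1) =
      (2 * ((n : ℝ) + 1)) • (hermiteRaising ^ n) 1 := by
  induction n with
  | zero => simp [derivative_hermiteRaising, smul_eq_C_mul, C_ofNat]
  | succ n ih =>
    rw [pow_succ', Module.End.mul_apply, derivative_hermiteRaising, ih, map_smul,
      ← Module.End.mul_apply, ← pow_succ', ← C_ofNat, ← smul_eq_C_mul]
    push_cast
    module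

lemma sqrt_mul_rpow_two_pow_mul_factorial_succ (n : ℕ) :
    √(2 * ((n : ℝ) + 1)) * (2 ^ (n + 1) * (n + 1).factorial : ℝ) ^ (-(1 : ℝ) / 2) =
      (2 ^ n * n.factorial : ℝ) ^ (-(1 : ℝ) / 2) := by
  have hpos : (0 : ℝ) < 2 * (n + 1) := by positivity
  have hsucc : (2 ^ (n + 1) * (n + 1).factorial : ℝ) =
      2 * (n + 1) * (2 ^ n * n.factorial) := by
    rw [Nat.factorial_succ]
    push_cast
    ring
  rw [hsucc, Real.mul_rpow hpos.le (by positivity), Real.sqrt_eq_rpow, ← mul_assoc,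
    ← Real.rpow_add hpos]
  norm_num

/-- The polynomial factor of `hermiteFun n`, including the normalization
`(2^n n!)^{-1/2} π^{-1/4}`. -/
noncomputable def hermitePoly (n : ℕ) : ℝ[X] :=
  ((2 ^ n * n.factorial : ℝ) ^ (-(1 : ℝ) / 2) * Real.pi ^ (-(1 : ℝ) / 4)) •
    (hermiteRaising ^ n) 1

lemma derivative_hermitePoly_zero : derivative (hermitePoly 0) = 0 := by
  simp [hermitePoly]

lemma hermiteRaising_hermitePoly (n : ℕ) :
    hermiteRaising (hermitePoly n) = √(2 * ((n : ℝ) + 1)) • hermitePoly (n + 1) := by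
  rw [hermitePoly, hermitePoly, map_smul, ← Module.End.mul_apply, ← pow_succ', smul_smul,
    ← mul_assoc, sqrt_mul_rpow_two_pow_mul_factorial_succ]

lemma derivative_hermitePoly_succ (n : ℕ) :
    derivative (hermitePoly (n + 1)) = √(2 * ((n : ℝ) + 1)) • hermitePoly n := by
  rw [hermitePoly, hermitePoly, derivative_smul, derivative_hermiteRaising_pow_succ_one, smul_smul,
    smul_smul, ← sqrt_mul_rpow_two_pow_mul_factorial_succ n]
  congr 1
  linear_combination -(2 ^ (n + 1) * (n + 1).factorial : ℝ) ^ (-(1 : ℝ) / 2) *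
    Real.pi ^ (-(1 : ℝ) / 4) * Real.mul_self_sqrt (show (0 : ℝ) ≤ 2 * (n + 1) by positivity)

/-- The polynomials `hermitePoly` indexed by `ℤ` and extended by zero to negative indices, as in
`hermiteZ`. -/
noncomputable def hermitePolyZ (k : ℤ) : ℝ[X] :=
  if 0 ≤ k then hermitePoly k.toNat else 0

lemma hermitePolyZ_natCast (n : ℕ) : hermitePolyZ n = hermitePoly n := by
  simp [hermitePolyZ]

lemma hermitePolyZ_of_neg {k : ℤ} (hk : k < 0) : hermitePolyZ k = 0 := by
  simp [hermitePolyZ, hk]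

lemma derivative_hermitePolyZ (k : ℤ) :
    derivative (hermitePolyZ k) = √(2 * (k : ℝ)) • hermitePolyZ (k - 1) := by
  rcases lt_or_ge k 0 with hk | hk
  · simp [hermitePolyZ_of_neg hk, hermitePolyZ_of_neg (show k - 1 < 0 by lia)]
  lift k to ℕ using hk
  cases k with
  | zero =>
    rw [hermitePolyZ_natCast, derivative_hermitePoly_zero]
    simp
  | succ n =>
    rw [hermitePolyZ_natCast, derivative_hermitePoly_succ, ← hermitePolyZ_natCast]
    push_cast
    simp

lemma hermiteRaising_hermitePolyZ (k : ℤ) :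
    hermiteRaising (hermitePolyZ k) = √(2 * ((k : ℝ) + 1)) • hermitePolyZ (k + 1) := by
  rcases lt_or_ge k 0 with hk | hk
  · have hk' : (k : ℝ) + 1 ≤ 0 := by exact_mod_cast hk
    rw [hermitePolyZ_of_neg hk, Real.sqrt_eq_zero_of_nonpos (by linarith), map_zero, zero_smul]
  · lift k to ℕ using hk
    exact_mod_cast hermiteRaising_hermitePoly k

/-- The operator `(A + ε C) / 2` with `A = d/dx + x` and `C = -d/dx + x`, conjugated by the
Gaussian `exp (-x²/2)`. -/
noncomputable def hermiteLadder (ε : ℝ) : Module.End ℝ ℝ[X] :=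
  (2⁻¹ : ℝ) • (derivative + ε • hermiteRaising)

lemma sqrt_two_mul_div_two (x : ℝ) : √(2 * x) / 2 = √(x / 2) := by
  rw [show x / 2 = 2 * x / 2 ^ 2 by ring, Real.sqrt_div' _ (by positivity),
    Real.sqrt_sq zero_le_two]

lemma hermiteLadder_hermitePolyZ (ε : ℝ) (k : ℤ) :
    hermiteLadder ε (hermitePolyZ k) = √((k : ℝ) / 2) • hermitePolyZ (k - 1) +
      ε • √(((k : ℝ) + 1) / 2) • hermitePolyZ (k + 1) := by
  simp only [hermiteLadder, LinearMap.smul_apply, LinearMap.add_apply, derivative_hermitePolyZ,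
    hermiteRaising_hermitePolyZ, ← sqrt_two_mul_div_two]
  module

end HermitePolynomial

section GaussianMul

/-- The function `p(x) exp (-x²/2)`, as a linear map in the polynomial `p`. -/
noncomputable def gaussianMul : ℝ[X] →ₗ[ℝ] ℝ → ℝ where
  toFun p x := p.eval x * Real.exp (-(x ^ 2) / 2)
  map_add' p r := by ext x; simp [add_mul]
  map_smul' c p := by ext x; simp [mul_assoc]

lemma gaussianMul_apply (p : ℝ[X]) (x : ℝ) :
    gaussianMul p x = p.eval x * Real.exp (-(x ^ 2) / 2) := rfl

lemma gaussianMul_mul_gaussianMul (p r : ℝ[X]) (x : ℝ) :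
    gaussianMul p x * gaussianMul r x = (p * r).eval x * Real.exp (-(x ^ 2)) := by
  rw [gaussianMul_apply, gaussianMul_apply, mul_mul_mul_comm, ← eval_mul, ← Real.exp_add,
    add_halves]

lemma hasDerivAt_gaussianMul (p : ℝ[X]) (x : ℝ) :
    HasDerivAt (gaussianMul p) (gaussianMul (derivative p) x - x * gaussianMul p x) x := by
  have hexponent : HasDerivAt (fun t : ℝ => -(t ^ 2) / 2) (-x) x :=
    ((hasDerivAt_pow 2 x).fun_neg.div_const 2).congr_deriv (by simp [neg_div])
  refine ((p.hasDerivAt x).mul hexponent.exp).congr_deriv ?_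
  simp only [gaussianMul_apply]
  ring

lemma deriv_gaussianMul_add (p : ℝ[X]) (x : ℝ) :
    deriv (gaussianMul p) x + x * gaussianMul p x = gaussianMul (derivative p) x := by
  rw [(hasDerivAt_gaussianMul p x).deriv, sub_add_cancel]

lemma neg_deriv_gaussianMul_add (p : ℝ[X]) (x : ℝ) :
    -deriv (gaussianMul p) x + x * gaussianMul p x = gaussianMul (hermiteRaising p) x := by
  rw [(hasDerivAt_gaussianMul p x).deriv]
  simp only [gaussianMul_apply, hermiteRaising_apply, eval_sub, eval_mul, eval_ofNat, eval_X]
  ring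

lemma semiconj_gaussianMul_hermiteRaising :
    Function.Semiconj gaussianMul hermiteRaising fun f t => -deriv f t + t * f t :=
  fun p => funext fun x => (neg_deriv_gaussianMul_add p x).symm

lemma semiconj_gaussianMul_hermiteLadder (ε : ℝ) :
    Function.Semiconj gaussianMul (hermiteLadder ε) fun f t =>
      ((deriv f t + t * f t) + ε * (-deriv f t + t * f t)) / 2 := by
  intro p
  ext x
  simp only [deriv_gaussianMul_add, neg_deriv_gaussianMul_add, hermiteLadder, LinearMap.smul_apply,
    LinearMap.add_apply, map_smul, map_add, Pi.smul_apply, Pi.add_apply, smul_eq_mul]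
  ring

lemma hermiteFun_eq_gaussianMul (n : ℕ) : hermiteFun n = gaussianMul (hermitePoly n) := by
  have hground : (fun t : ℝ => Real.pi ^ (-(1 : ℝ) / 4) * Real.exp (-(t ^ 2) / 2)) =
      gaussianMul (Real.pi ^ (-(1 : ℝ) / 4) • 1) := by
    ext t
    simp [gaussianMul_apply]
  ext x
  rw [hermiteFun, hground, ← semiconj_gaussianMul_hermiteRaising.iterate_right n,
    ← Module.End.pow_apply, hermitePoly, mul_smul]
  simp only [map_smul, Pi.smul_apply, smul_eq_mul]

lemma hermiteZ_eq_gaussianMul (k : ℤ) : hermiteZ k = gaussianMul (hermitePolyZ k) := by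
  unfold hermiteZ hermitePolyZ
  split_ifs
  · exact hermiteFun_eq_gaussianMul _
  · exact (map_zero gaussianMul).symm

end GaussianMul

section GaussianNorm

lemma integrable_eval_mul_exp_neg_sq (p : ℝ[X]) :
    Integrable fun x : ℝ => p.eval x * Real.exp (-(x ^ 2)) := by
  induction p using Polynomial.induction_on' with
  | add p r hp hr => simpa only [eval_add, add_mul] using hp.fun_add hr
  | monomial n c =>
    have hn : (-1 : ℝ) < n := by linarith [n.cast_nonneg (α := ℝ)]
    simpa [mul_assoc] using
      (integrable_rpow_mul_exp_neg_mul_sq one_pos hn).const_mul c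

lemma integral_hermiteRaising_eval_mul_exp_neg_sq (p : ℝ[X]) :
    ∫ x : ℝ, (hermiteRaising p).eval x * Real.exp (-(x ^ 2)) = 0 := by
  refine integral_eq_zero_of_hasDerivAt_of_integrable
    (f := fun x => (-p).eval x * Real.exp (-(x ^ 2))) (fun x => ?_)
    (integrable_eval_mul_exp_neg_sq _) (integrable_eval_mul_exp_neg_sq _)
  refine (((-p).hasDerivAt x).mul (hasDerivAt_pow 2 x).neg.exp).congr_deriv ?_
  simp only [hermiteRaising_apply, derivative_neg, eval_neg, eval_sub, eval_mul, eval_ofNat, eval_X,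
    Pi.neg_apply, Nat.cast_ofNat, Nat.add_one_sub_one, pow_one]
  ring

lemma integral_gaussianMul_hermiteRaising_mul (p r : ℝ[X]) :
    ∫ x, gaussianMul (hermiteRaising p) x * gaussianMul r x =
      ∫ x, gaussianMul p x * gaussianMul (derivative r) x := by
  rw [← sub_eq_zero, ← integral_hermiteRaising_eval_mul_exp_neg_sq (p * r), hermiteRaising_mul]
  simp only [gaussianMul_mul_gaussianMul, eval_sub, sub_mul]
  exact (integral_sub (integrable_eval_mul_exp_neg_sq _) (integrable_eval_mul_exp_neg_sq _)).symm

lemma memLp_two_gaussianMul (p : ℝ[X]) : MemLp (gaussianMul p) 2 := by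
  have hcont : Continuous (gaussianMul p) :=
    continuous_iff_continuousAt.2 fun x => (hasDerivAt_gaussianMul p x).continuousAt
  refine (memLp_two_iff_integrable_sq hcont.aestronglyMeasurable).2 ?_
  simpa only [sq (gaussianMul p _), gaussianMul_mul_gaussianMul] using
    integrable_eval_mul_exp_neg_sq (p * p)

/-- The function `p(x) exp (-x²/2)` as an element of `L²(ℝ)`, linearly in the polynomial `p`. -/
noncomputable def gaussianToLp : ℝ[X] →ₗ[ℝ] Lp ℝ 2 (volume : Measure ℝ) where
  toFun p := (memLp_two_gaussianMul p).toLp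
  map_add' p r := by
    simp only [map_add]
    exact MemLp.toLp_add _ _
  map_smul' c p := by
    simp only [map_smul]
    exact MemLp.toLp_const_smul c _

/-- The `L²(ℝ)` norm of `p(x) exp (-x²/2)`, as a seminorm in the polynomial `p`. -/
noncomputable def gaussianSeminorm : Seminorm ℝ ℝ[X] :=
  (normSeminorm ℝ (Lp ℝ 2 (volume : Measure ℝ))).comp gaussianToLp

lemma gaussianSeminorm_eq_integral_rpow (p : ℝ[X]) :
    gaussianSeminorm p = (∫ x, gaussianMul p x ^ 2) ^ ((1 : ℝ) / 2) := by
  change ‖(memLp_two_gaussianMul p).toLp‖ = _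
  rw [Lp.norm_toLp,
    (memLp_two_gaussianMul p).eLpNorm_eq_integral_rpow_norm two_ne_zero ENNReal.ofNat_ne_top,
    ENNReal.toReal_ofReal (by positivity)]
  simp

lemma integral_sq_gaussianMul_hermitePoly (n : ℕ) :
    ∫ x, gaussianMul (hermitePoly n) x ^ 2 = 1 := by
  induction n with
  | zero =>
    have hsq (x : ℝ) : gaussianMul (hermitePoly 0) x ^ 2 =
        (Real.pi ^ (-(1 : ℝ) / 4)) ^ 2 * Real.exp (-1 * x ^ 2) := by
      rw [sq, gaussianMul_mul_gaussianMul]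
      simp [hermitePoly, sq]
    simp only [hsq]
    rw [integral_const_mul, integral_gaussian, div_one, Real.sqrt_eq_rpow, ← Real.rpow_natCast,
      ← Real.rpow_mul Real.pi_pos.le, ← Real.rpow_add Real.pi_pos]
    norm_num
  | succ n ih =>
    have hadjoint := integral_gaussianMul_hermiteRaising_mul (hermitePoly n) (hermitePoly (n + 1))
    simp only [hermiteRaising_hermitePoly, derivative_hermitePoly_succ, map_smul, Pi.smul_apply,
      smul_eq_mul, mul_assoc, mul_left_comm _ (√_), integral_const_mul] at hadjoint
    simp only [sq] at ih ⊢
    rw [← ih]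
    exact mul_left_cancel₀ (by positivity) hadjoint

lemma gaussianSeminorm_hermitePolyZ_le_one (k : ℤ) : gaussianSeminorm (hermitePolyZ k) ≤ 1 := by
  unfold hermitePolyZ
  split_ifs
  · simp [gaussianSeminorm_eq_integral_rpow, integral_sq_gaussianMul_hermitePoly]
  · simp

end GaussianNorm

lemma gaussianMul_smul_hermiteLadder_pow_sub (c d ε : ℝ) (n ℓ : ℕ) (x : ℝ) :
    gaussianMul (c • (hermiteLadder ε ^ ℓ) (hermitePolyZ n) -
        d • binomialShift hermitePolyZ ε ℓ n) x =
      c * ((fun f : ℝ → ℝ => fun t =>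
          ((deriv f t + t * f t) + ε * (-deriv f t + t * f t)) / 2)^[ℓ] (hermiteFun n)) x -
        d * ∑ l ∈ Finset.range (ℓ + 1),
          ε ^ l * (ℓ.choose l : ℝ) * hermiteZ ((n : ℤ) + 2 * l - ℓ) x := by
  rw [hermiteFun_eq_gaussianMul, ← (semiconj_gaussianMul_hermiteLadder ε).iterate_right ℓ,
    hermitePolyZ_natCast, Module.End.pow_apply]
  simp [binomialShift, hermiteZ_eq_gaussianMul]

theorem asymptotic_creation_annihilation_general {ι : Type*} {L : Filter ι} (ℓ : ℕ) (a ε : ℝ)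
    (εq : ι → ℝ) (nq : ι → ℕ) (hεq : ∀ q, 0 ≤ εq q) (h1 : Tendsto εq L (𝓝 0))
    (h2 : Tendsto (fun q => εq q * nq q) L (𝓝 (a / 2))) :
    Tendsto (fun q =>
      (∫ x : ℝ,
        ((εq q) ^ ((ℓ : ℝ) / 2) *
            ((fun f : ℝ → ℝ => fun t =>
                ((deriv f t + t * f t) + ε * (-deriv f t + t * f t)) / 2)^[ℓ]
              (hermiteFun (nq q))) x -
          (a / 4) ^ ((ℓ : ℝ) / 2) *
            ∑ l ∈ Finset.range (ℓ + 1),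
              ε ^ l * (ℓ.choose l : ℝ) * hermiteZ ((nq q : ℤ) + 2 * l - ℓ) x) ^ 2) ^
        ((1 : ℝ) / 2))
      L (𝓝 0) := by
  rcases eq_or_neBot L with rfl | _
  · exact tendsto_bot
  have ha : 0 ≤ a / 2 := ge_of_tendsto' h2 fun q => mul_nonneg (hεq q) (nq q).cast_nonneg
  have hpow {x : ℝ} (hx : 0 ≤ x) : x ^ ((ℓ : ℝ) / 2) = √x ^ ℓ := by
    rw [Real.rpow_div_two_eq_sqrt _ hx, Real.rpow_natCast]
  refine (tendsto_seminorm_ladder_pow_sub_binomialShift gaussianSeminorm (hermiteLadder ε)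
    gaussianSeminorm_hermitePolyZ_le_one (hermiteLadder_hermitePolyZ ε) hεq h1
    (n := fun q => nq q) (by simpa using h2) ℓ).congr fun q => ?_
  simp only [gaussianSeminorm_eq_integral_rpow, gaussianMul_smul_hermiteLadder_pow_sub,
    hpow (hεq q), hpow (show 0 ≤ a / 4 by linarith)]

/-- Asymptotic commutation lemma: with `A f = f' + xf`, `C f = -f' + xf`, if `ε_q → 0` and
`ε_q n_q → a/2`, then `ε_q^{ℓ/2} ((A ± C)/2)^ℓ H_{n_q}` is `L²`-close to
`(a/4)^{ℓ/2} ∑_{ℓ'} (±1)^{ℓ'} C(ℓ,ℓ') H_{n_q + 2ℓ' - ℓ}`. -/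
theorem asymptotic_creation_annihilation (ℓ : ℕ) (a : ℝ) (ha : 0 ≤ a)
    (ε : ℝ) (hε : ε = 1 ∨ ε = -1)
    (εq : ℕ → ℝ) (nq : ℕ → ℕ) (hεq : ∀ q, 0 < εq q)
    (h1 : Tendsto εq atTop (nhds 0))
    (h2 : Tendsto (fun q => εq q * nq q) atTop (nhds (a / 2))) :
    Tendsto (fun q =>
      (∫ x : ℝ,
        ((εq q) ^ ((ℓ : ℝ) / 2) *
            ((fun f : ℝ → ℝ => fun t =>
                ((deriv f t + t * f t) + ε * (-deriv f t + t * f t)) / 2)^[ℓ]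
              (hermiteFun (nq q))) x -
          (a / 4) ^ ((ℓ : ℝ) / 2) *
            ∑ l ∈ Finset.range (ℓ + 1),
              ε ^ l * (ℓ.choose l : ℝ) * hermiteZ ((nq q : ℤ) + 2 * l - ℓ) x) ^ 2) ^
        ((1 : ℝ) / 2))
      atTop (nhds 0) := by
  exact asymptotic_creation_annihilation_general ℓ a ε εq nq (fun q => (hεq q).le) h1 h2
end

section
/- Let b ∈ ℤ, a ≥ 0, x, y ∈ ℝ, and let (ε_q)_{q∈ℕ} be a sequence of positive reals and (n_q)_{q∈ℕ} a sequence of natural numbers such that ε_q → 0, ε_q n_q → a/2, and m_q := n_q + b ≥ 0 for all sufficiently large q. Then ∫_ℝ e^{i ε_q ξ y} H_{m_q, ε_q}(ξ + x) H_{n_q, ε_q}(ξ) dξ converges, as q → ∞, to K(a, x, y, b) = ∑_{ℓ₁,ℓ₂=0}^∞ (a/4)^{(ℓ₁+ℓ₂)/2} F_{ℓ₁,ℓ₂}(b) (iy)^{ℓ₁} x^{ℓ₂} / (ℓ₁! ℓ₂!). -/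
open Filter Complex

/-- The alternate Vandermonde convolution `F_{ℓ₁,ℓ₂}(k)`. -/
def altVandermonde (ℓ₁ ℓ₂ : ℕ) (k : ℤ) : ℤ :=
  ∑ l₁ ∈ Finset.range (ℓ₁ + 1), ∑ l₂ ∈ Finset.range (ℓ₂ + 1),
    (-1) ^ (ℓ₂ - l₂) * (ℓ₁.choose l₁ : ℤ) * (ℓ₂.choose l₂ : ℤ) *
      (if 2 * ((l₁ : ℤ) + l₂) = k + ℓ₁ + ℓ₂ then 1 else 0)

/-- The boundary Fourier kernel
`K(a,x,y,b) = ∑_{ℓ₁,ℓ₂} (a/4)^{(ℓ₁+ℓ₂)/2} F_{ℓ₁,ℓ₂}(b) (iy)^{ℓ₁} x^{ℓ₂}/(ℓ₁! ℓ₂!)`. -/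
noncomputable def boundaryKernel (a x y : ℝ) (b : ℤ) : ℂ :=
  ∑' ℓ : ℕ × ℕ,
    (((a / 4) ^ (((ℓ.1 : ℝ) + ℓ.2) / 2) : ℝ) : ℂ) * (altVandermonde ℓ.1 ℓ.2 b : ℂ) *
      (I * y) ^ ℓ.1 * (x : ℂ) ^ ℓ.2 / ((ℓ.1.factorial : ℂ) * ℓ.2.factorial)

/-! Let `Z` be a standard Gaussian variable. The integral is `𝔼[P(Z) exp(zZ)]`, up to a constant,
for a product `P` of a shifted and an unshifted Hermite polynomial. By the Stein identity
`𝔼[Z p(Z) exp(zZ)] = z 𝔼[p(Z) exp(zZ)] + 𝔼[p'(Z) exp(zZ)]`, it is an exponential factor tending to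
`1` times the coefficient of `w ^ b` in a product of two polynomials, one in `w` and one in `w⁻¹`.
These are the exponential series of `√(εq mq / 2) (iy + x) w` and `√(εq nq / 2) (iy - x) w⁻¹` with
the powers of `mq` and `nq` under the root replaced by falling factorials, so dominated convergence
gives in the limit the coefficient of `w ^ b` in `exp (p w + q w⁻¹)`, where `p = √(a/4) (iy + x)`
and `q = √(a/4) (iy - x)`. Regrouping the exponent as `√(a/4) iy (w + w⁻¹) + √(a/4) x (w - w⁻¹)`
turns this into the kernel, because `altVandermonde` is the coefficient of `w ^ b` in
`(w + w⁻¹) ^ ℓ₁ * (w - w⁻¹) ^ ℓ₂`. -/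

section TiltedGaussian

open MeasureTheory ProbabilityTheory Polynomial

theorem integrable_eval_mul_cexp_gaussianReal (p : ℂ[X]) (z : ℂ) :
    Integrable (fun r : ℝ => p.eval (r : ℂ) * cexp (z * r)) (gaussianReal 0 1) := by
  induction p using Polynomial.induction_on' with
  | add p q hp hq => simpa only [eval_add, add_mul] using! hp.add hq
  | monomial n c =>
    have hz : z.re ∈ interior (integrableExpSet id (gaussianReal 0 1)) := by
      simp [integrableExpSet_id_gaussianReal]
    simpa only [eval_monomial, mul_assoc, id] using
      (integrable_pow_mul_cexp_of_re_mem_interior_integrableExpSet hz n).const_mul c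

/-- The functional `p ↦ 𝔼[p(Z) exp(zZ)]` on polynomials, for a standard Gaussian variable `Z` and a
complex tilt `z`. -/
noncomputable def tiltedGaussian (z : ℂ) : ℂ[X] →ₗ[ℂ] ℂ where
  toFun p := ∫ r : ℝ, p.eval (r : ℂ) * cexp (z * r) ∂gaussianReal 0 1
  map_add' p q := by
    simp only [eval_add, add_mul]
    exact integral_add (integrable_eval_mul_cexp_gaussianReal p z)
      (integrable_eval_mul_cexp_gaussianReal q z)
  map_smul' c p := by
    simp only [eval_smul, smul_eq_mul, mul_assoc, integral_const_mul, RingHom.id_apply]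

theorem tiltedGaussian_apply (z : ℂ) (p : ℂ[X]) :
    tiltedGaussian z p = ∫ r : ℝ, p.eval (r : ℂ) * cexp (z * r) ∂gaussianReal 0 1 :=
  rfl

theorem tiltedGaussian_one (z : ℂ) : tiltedGaussian z 1 = cexp (z ^ 2 / 2) := by
  simpa [tiltedGaussian_apply, complexMGF] using
    complexMGF_id_gaussianReal (μ := 0) (v := 1) z

theorem hasDerivAt_tiltedGaussian_X_pow (n : ℕ) (z : ℂ) :
    HasDerivAt (fun w => tiltedGaussian w (X ^ n)) (tiltedGaussian z (X ^ (n + 1))) z := by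
  have hz : z.re ∈ interior (integrableExpSet id (gaussianReal 0 1)) := by
    simp [integrableExpSet_id_gaussianReal]
  simpa only [tiltedGaussian_apply, eval_pow, eval_X, id] using hasDerivAt_integral_pow_mul_exp hz n

theorem tiltedGaussian_X_pow_succ (n : ℕ) (z : ℂ) :
    tiltedGaussian z (X ^ (n + 1)) =
      z * tiltedGaussian z (X ^ n) + n * tiltedGaussian z (X ^ (n - 1)) := by
  induction n generalizing z with
  | zero =>
    have hexp : HasDerivAt (fun w => tiltedGaussian w (X ^ 0)) (cexp (z ^ 2 / 2) * z) z := by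
      simpa [tiltedGaussian_one] using (((hasDerivAt_id z).pow 2).div_const 2).cexp
    rw [(hasDerivAt_tiltedGaussian_X_pow 0 z).unique hexp]
    simp [tiltedGaussian_one, mul_comm]
  | succ n ih =>
    have hderiv : HasDerivAt (fun w => tiltedGaussian w (X ^ (n + 1)))
        (1 * tiltedGaussian z (X ^ n) + z * tiltedGaussian z (X ^ (n + 1)) +
          n * tiltedGaussian z (X ^ (n - 1 + 1))) z := by
      rw [funext ih]
      exact ((hasDerivAt_id z).mul (hasDerivAt_tiltedGaussian_X_pow n z)).add
        ((hasDerivAt_tiltedGaussian_X_pow (n - 1) z).const_mul _)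
    rw [(hasDerivAt_tiltedGaussian_X_pow (n + 1) z).unique hderiv]
    cases n <;> simp <;> ring

theorem tiltedGaussian_X_mul (z : ℂ) (p : ℂ[X]) :
    tiltedGaussian z (X * p) = z * tiltedGaussian z p + tiltedGaussian z (derivative p) := by
  induction p using Polynomial.induction_on' with
  | add p q hp hq => simp only [mul_add, map_add, hp, hq]; ring
  | monomial n c =>
    have hX : X * monomial n c = c • X ^ (n + 1) := by rw [X_mul_monomial, smul_X_eq_monomial]
    have hD : derivative (monomial n c) = (c * n) • X ^ (n - 1) := by
      rw [derivative_monomial, smul_X_eq_monomial]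
    rw [hX, hD, ← smul_X_eq_monomial]
    simp only [map_smul, smul_eq_mul, tiltedGaussian_X_pow_succ]
    ring

end TiltedGaussian

section HermiteMoments

open Polynomial

theorem derivative_hermite_succ (n : ℕ) :
    derivative (hermite (n + 1)) = ((n + 1 : ℕ) : ℤ[X]) * hermite n := by
  induction n with
  | zero => simp
  | succ n ih =>
    have hrec : hermite (n + 1) = X * hermite n - derivative (hermite n) := hermite_succ n
    rw [hermite_succ (n + 1), derivative_sub, derivative_mul, derivative_X, ih,
      derivative_natCast_mul]
    push_cast
    linear_combination (-((n : ℤ[X]) + 1)) * hrec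

theorem iterate_derivative_hermite (n k : ℕ) :
    derivative^[k] (hermite n) = (n.descFactorial k : ℤ[X]) * hermite (n - k) := by
  induction k with
  | zero => simp
  | succ k ih =>
    rw [Function.iterate_succ_apply', ih, derivative_natCast_mul, Nat.descFactorial_succ]
    obtain hk | ⟨l, hl⟩ : n - k = 0 ∨ ∃ l, n - k = l + 1 := by
      cases n - k <;> simp
    · simp [hk]
    · rw [show n - (k + 1) = l by omega, hl, derivative_hermite_succ]
      push_cast
      ring

/-- The probabilists' Hermite polynomials with complex coefficients. -/
noncomputable def hermiteC (n : ℕ) : ℂ[X] :=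
  (hermite n).map (Int.castRingHom ℂ)

theorem hermiteC_zero : hermiteC 0 = 1 := by
  simp [hermiteC]

theorem hermiteC_succ (n : ℕ) : hermiteC (n + 1) = X * hermiteC n - derivative (hermiteC n) := by
  simp [hermiteC, hermite_succ, derivative_map]

theorem iterate_derivative_hermiteC (n k : ℕ) :
    derivative^[k] (hermiteC n) = (n.descFactorial k : ℂ) • hermiteC (n - k) := by
  rw [hermiteC, iterate_derivative_map, iterate_derivative_hermite]
  simp [hermiteC, smul_eq_C_mul]

theorem eval_hermiteC_ofReal (n : ℕ) (s : ℝ) :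
    (hermiteC n).eval (s : ℂ) = ((aeval s (hermite n) : ℝ) : ℂ) := by
  rw [hermiteC, eval_map, ← algebraMap_int_eq, ← aeval_def]
  exact aeval_algebraMap_apply ℂ s (hermite n)

theorem derivative_taylor {R : Type*} [CommSemiring R] (t : R) (p : R[X]) :
    derivative (taylor t p) = taylor t (derivative p) := by
  simp [taylor_apply, derivative_comp]

theorem iterate_derivative_taylor {R : Type*} [CommSemiring R] (t : R) (p : R[X]) (k : ℕ) :
    derivative^[k] (taylor t p) = taylor t (derivative^[k] p) :=
  Function.Commute.iterate_left (derivative_taylor t) k p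

theorem tiltedGaussian_taylor_hermiteC (z t : ℂ) (n : ℕ) :
    tiltedGaussian z (taylor t (hermiteC n)) = (z + t) ^ n * cexp (z ^ 2 / 2) := by
  induction n with
  | zero => simp [hermiteC_zero, tiltedGaussian_one]
  | succ n ih =>
    have hraise : taylor t (hermiteC (n + 1)) = X * taylor t (hermiteC n) +
        t • taylor t (hermiteC n) - derivative (taylor t (hermiteC n)) := by
      rw [hermiteC_succ, map_sub, taylor_mul, taylor_X, derivative_taylor, add_mul, smul_eq_C_mul]
    rw [hraise, map_sub, map_add, map_smul, tiltedGaussian_X_mul, ih, smul_eq_mul]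
    ring

theorem tiltedGaussian_mul_hermiteC_succ (z : ℂ) (p : ℂ[X]) (n : ℕ) :
    tiltedGaussian z (p * hermiteC (n + 1)) =
      tiltedGaussian z ((derivative + z • 1 : Module.End ℂ ℂ[X]) p * hermiteC n) := by
  have hraise : p * hermiteC (n + 1) = X * (p * hermiteC n) - p * derivative (hermiteC n) := by
    rw [hermiteC_succ]; ring
  have hlower : (derivative + z • 1 : Module.End ℂ ℂ[X]) p * hermiteC n =
      derivative p * hermiteC n + z • (p * hermiteC n) := by
    simp [add_mul]
  rw [hraise, hlower, map_sub, tiltedGaussian_X_mul, derivative_mul, map_add, map_add, map_smul,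
    smul_eq_mul]
  ring

theorem tiltedGaussian_mul_hermiteC (z : ℂ) (p : ℂ[X]) (n : ℕ) :
    tiltedGaussian z (p * hermiteC n) =
      tiltedGaussian z (((derivative + z • 1 : Module.End ℂ ℂ[X]) ^ n) p) := by
  induction n generalizing p with
  | zero => simp [hermiteC_zero]
  | succ n ih => rw [tiltedGaussian_mul_hermiteC_succ, ih, pow_succ, Module.End.mul_apply]

theorem tiltedGaussian_taylor_hermiteC_mul_hermiteC (z t : ℂ) (m n : ℕ) :
    tiltedGaussian z (taylor t (hermiteC m) * hermiteC n) = cexp (z ^ 2 / 2) *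
      ∑ k ∈ Finset.range (n + 1), (n.choose k * m.descFactorial k : ℂ) *
        ((z + t) ^ (m - k) * z ^ (n - k)) := by
  have hcomm : Commute (derivative : Module.End ℂ ℂ[X]) (z • 1) :=
    (Commute.one_right _).smul_right z
  rw [tiltedGaussian_mul_hermiteC, hcomm.add_pow, LinearMap.sum_apply, map_sum, Finset.mul_sum]
  refine Finset.sum_congr rfl fun k _ => ?_
  rw [_root_.smul_pow, one_pow]
  simp only [Module.End.mul_apply, Module.End.natCast_apply, LinearMap.smul_apply,
    Module.End.one_apply, Module.End.pow_apply, map_smul, ← Nat.cast_smul_eq_nsmul ℂ,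
    iterate_derivative_taylor, iterate_derivative_hermiteC, tiltedGaussian_taylor_hermiteC,
    smul_eq_mul]
  ring

end HermiteMoments

section HermiteFunctions

open MeasureTheory ProbabilityTheory Polynomial

theorem iterate_raising_gaussian (c : ℝ) (n : ℕ) :
    (fun f : ℝ → ℝ => fun t => -deriv f t + t * f t)^[n] (fun t => c * Real.exp (-(t ^ 2) / 2)) =
      fun t => c * √2 ^ n * aeval (√2 * t) (hermite n) * Real.exp (-(t ^ 2) / 2) := by
  induction n with
  | zero => simp
  | succ n ih =>
    funext t
    have hpoly : HasDerivAt (fun t : ℝ => aeval (√2 * t) (hermite n))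
        (aeval (√2 * t) (derivative (hermite n)) * (√2 * 1)) t :=
      ((hermite n).hasDerivAt_aeval (√2 * t)).comp t ((hasDerivAt_id t).const_mul √2)
    have hgauss : HasDerivAt (fun t : ℝ => Real.exp (-(t ^ 2) / 2))
        (Real.exp (-(t ^ 2) / 2) * (-(2 * t) / 2)) t := by
      simpa using ((hasDerivAt_pow 2 t).neg.div_const 2).exp
    rw [Function.iterate_succ_apply', ih, ((hpoly.const_mul (c * √2 ^ n)).fun_mul hgauss).deriv,
      hermite_succ, map_sub, map_mul, aeval_X]
    beta_reduce
    linear_combination (-(c * √2 ^ n * t * aeval (√2 * t) (hermite n) *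
      Real.exp (-(t ^ 2) / 2))) * Real.sq_sqrt (zero_le_two (α := ℝ))

theorem sqrt_pow_of_nonneg {c : ℝ} (hc : 0 ≤ c) (n : ℕ) : √(c ^ n) = √c ^ n := by
  rw [Real.sqrt_eq_rpow, Real.sqrt_eq_rpow, Real.rpow_pow_comm hc]

theorem hermiteFun_eq (n : ℕ) (x : ℝ) :
    hermiteFun n x = Real.pi ^ (-(1 : ℝ) / 4) * (√n.factorial)⁻¹ *
      aeval (√2 * x) (hermite n) * Real.exp (-(x ^ 2) / 2) := by
  have hnorm : ((2 : ℝ) ^ n * n.factorial) ^ (-(1 : ℝ) / 2) = (√2 ^ n)⁻¹ * (√n.factorial)⁻¹ := by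
    rw [neg_div, Real.rpow_neg (by positivity), ← Real.sqrt_eq_rpow, Real.sqrt_mul (by positivity),
      mul_inv, sqrt_pow_of_nonneg zero_le_two]
  rw [hermiteFun, iterate_raising_gaussian, hnorm]
  field_simp

theorem hermiteScaled_eq (n : ℕ) {η : ℝ} (hη : 0 ≤ η) (x : ℝ) :
    hermiteScaled n η x = √√(η / Real.pi) * (√n.factorial)⁻¹ *
      aeval (√(2 * η) * x) (hermite n) * Real.exp (-(η * x ^ 2) / 2) := by
  have hnorm : √√(η / Real.pi) = η ^ ((1 : ℝ) / 4) * Real.pi ^ (-(1 : ℝ) / 4) := by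
    rw [Real.sqrt_eq_rpow, Real.sqrt_eq_rpow, ← Real.rpow_mul (by positivity), neg_div,
      Real.rpow_neg Real.pi_pos.le, Real.div_rpow hη Real.pi_pos.le, div_eq_mul_inv]
    norm_num
  rw [hermiteScaled, hermiteFun_eq, ← Real.sqrt_eq_rpow, mul_pow, Real.sq_sqrt hη, ← mul_assoc √2,
    ← Real.sqrt_mul zero_le_two, hnorm]
  ring

theorem hermiteScaled_mul_hermiteScaled_eq (m n : ℕ) {ε : ℝ} (hε : 0 ≤ ε) (x y ξ : ℝ) :
    cexp (I * ε * ξ * y) * (hermiteScaled m ε (ξ + x) : ℂ) * (hermiteScaled n ε ξ : ℂ) =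
      ((√m.factorial)⁻¹ * (√n.factorial)⁻¹ * Real.exp (-(ε * x ^ 2) / 2) * √(2 * ε) : ℝ) *
        (gaussianPDFReal 0 1 (√(2 * ε) * ξ) •
          ((taylor (√(2 * ε) * x : ℂ) (hermiteC m) * hermiteC n).eval (↑(√(2 * ε) * ξ)) *
            cexp (√(2 * ε) / 2 * (I * y - x) * ↑(√(2 * ε) * ξ)))) := by
  set σ : ℝ := √(2 * ε) with hσ
  have hconst : √√(ε / Real.pi) * √√(ε / Real.pi) = σ * (√(2 * Real.pi))⁻¹ := by
    rw [Real.mul_self_sqrt (Real.sqrt_nonneg _), ← div_eq_mul_inv, hσ,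
      ← Real.sqrt_div (by positivity), mul_div_mul_left _ _ two_ne_zero]
  have hexp : cexp (I * ε * ξ * y) * Real.exp (-(ε * (ξ + x) ^ 2) / 2) *
      Real.exp (-(ε * ξ ^ 2) / 2) = Real.exp (-(ε * x ^ 2) / 2) * Real.exp (-(σ * ξ) ^ 2 / 2) *
        cexp (σ / 2 * (I * y - x) * ↑(σ * ξ)) := by
    have hsq : (σ : ℂ) ^ 2 = 2 * ε := mod_cast Real.sq_sqrt (by positivity : 0 ≤ 2 * ε)
    push_cast
    rw [← Complex.exp_add, ← Complex.exp_add, ← Complex.exp_add, ← Complex.exp_add]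
    congr 1
    linear_combination (ξ ^ 2 / 2 - (I * y - x) * ξ / 2) * hsq
  have hpoly : (taylor (σ * x : ℂ) (hermiteC m)).eval (↑(σ * ξ)) =
      ((aeval (σ * (ξ + x)) (hermite m) : ℝ) : ℂ) := by
    rw [taylor_eval, ← eval_hermiteC_ofReal, mul_add, ofReal_add, ofReal_mul σ x]
  rw [hermiteScaled_eq m hε, hermiteScaled_eq n hε, eval_mul, hpoly, eval_hermiteC_ofReal,
    gaussianPDFReal, real_smul, NNReal.coe_one, mul_one, mul_one, sub_zero, ← hσ]
  calc
    _ = (√√(ε / Real.pi) * √√(ε / Real.pi) : ℝ) * (cexp (I * ε * ξ * y) *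
          Real.exp (-(ε * (ξ + x) ^ 2) / 2) * Real.exp (-(ε * ξ ^ 2) / 2)) *
        (((√m.factorial)⁻¹ * (√n.factorial)⁻¹ : ℝ) * ((aeval (σ * (ξ + x)) (hermite m) : ℝ) *
          (aeval (σ * ξ) (hermite n) : ℝ))) := by
      simp only [ofReal_mul]; ring
    _ = _ := by
      rw [hexp, hconst]
      simp only [ofReal_mul]
      ring

theorem integral_cexp_mul_hermiteScaled_mul_hermiteScaled (m n : ℕ) {ε : ℝ} (hε : 0 < ε)
    (x y : ℝ) :
    ∫ ξ : ℝ, cexp (I * ε * ξ * y) * (hermiteScaled m ε (ξ + x) : ℂ) * (hermiteScaled n ε ξ : ℂ) =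
      ((√m.factorial)⁻¹ * (√n.factorial)⁻¹ * Real.exp (-(ε * x ^ 2) / 2) : ℝ) *
        tiltedGaussian (√(2 * ε) / 2 * (I * y - x))
          (taylor (√(2 * ε) * x : ℂ) (hermiteC m) * hermiteC n) := by
  have hσ : 0 < √(2 * ε) := by positivity
  have hσ' : (√(2 * ε) : ℂ) ≠ 0 := by exact_mod_cast hσ.ne'
  simp_rw [hermiteScaled_mul_hermiteScaled_eq m n hε.le]
  rw [integral_const_mul, Measure.integral_comp_mul_left (fun r : ℝ => gaussianPDFReal 0 1 r •
      ((taylor (√(2 * ε) * x : ℂ) (hermiteC m) * hermiteC n).eval (r : ℂ) *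
        cexp (√(2 * ε) / 2 * (I * y - x) * r))), abs_of_pos (inv_pos.2 hσ),
    ← integral_gaussianReal_eq_integral_smul one_ne_zero, ← tiltedGaussian_apply, real_smul]
  push_cast
  field_simp

end HermiteFunctions

section LaurentCoeff

open Topology

/-- The coefficient of `w ^ b` in the product of the Laurent series `∑ j, u j * w ^ j` and
`∑ i, v i * w ^ (-i)`. -/
noncomputable def laurentCoeff (u v : ℕ → ℂ) (b : ℤ) : ℂ :=
  ∑' z : ℕ × ℕ, if (z.1 : ℤ) - z.2 = b then u z.1 * v z.2 else 0

theorem tendsto_laurentCoeff {ι : Type*} {l : Filter ι} {u v : ι → ℕ → ℂ} {u' v' : ℕ → ℂ}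
    {A B : ℕ → ℝ} (hA : Summable A) (hB : Summable B)
    (hu : ∀ j, Tendsto (u · j) l (𝓝 (u' j))) (hv : ∀ j, Tendsto (v · j) l (𝓝 (v' j)))
    (huA : ∀ᶠ q in l, ∀ j, ‖u q j‖ ≤ A j) (hvB : ∀ᶠ q in l, ∀ j, ‖v q j‖ ≤ B j) (b : ℤ) :
    Tendsto (fun q => laurentCoeff (u q) (v q) b) l (𝓝 (laurentCoeff u' v' b)) := by
  obtain rfl | hl := l.eq_or_neBot
  · exact tendsto_bot
  have nonneg_of_bound {w : ι → ℕ → ℂ} {C : ℕ → ℝ} (h : ∀ᶠ q in l, ∀ j, ‖w q j‖ ≤ C j) : 0 ≤ C :=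
    have ⟨_, hq⟩ := h.exists
    fun j => (norm_nonneg _).trans (hq j)
  refine tendsto_tsum_of_dominated_convergence
    (hA.mul_of_nonneg hB (nonneg_of_bound huA) (nonneg_of_bound hvB)) (fun z => ?_) ?_
  · split_ifs
    · exact (hu z.1).mul (hv z.2)
    · exact tendsto_const_nhds
  · filter_upwards [huA, hvB] with q hqA hqB z
    have hz : ‖u q z.1 * v q z.2‖ ≤ A z.1 * B z.2 :=
      norm_mul_le_of_le (hqA z.1) (hqB z.2)
    split_ifs
    · exact hz
    · exact norm_zero.trans_le ((norm_nonneg _).trans hz)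

theorem laurentCoeff_eq_sum_range {u : ℕ → ℂ} {m : ℕ} (hu : ∀ j, m < j → u j = 0) (v : ℕ → ℂ)
    (n : ℕ) :
    laurentCoeff u v (m - n) = ∑ k ∈ Finset.range (min m n + 1), u (m - k) * v (n - k) := by
  have hinj : Set.InjOn (fun k => (m - k, n - k)) (Finset.range (min m n + 1)) := by
    intro k hk l hl hkl
    simp only [Finset.coe_range, Set.mem_Iio, Prod.mk.injEq] at hk hl hkl
    omega
  rw [laurentCoeff, tsum_eq_sum (s := (Finset.range (min m n + 1)).image fun k => (m - k, n - k)),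
    Finset.sum_image hinj]
  · refine Finset.sum_congr rfl fun k hk => if_pos ?_
    rw [Finset.mem_range] at hk
    omega
  · rintro ⟨j, i⟩ hji
    refine ite_eq_right_iff.2 fun hdiff => ?_
    obtain hj | hj := lt_or_ge m j
    · rw [hu j hj, zero_mul]
    refine absurd (Finset.mem_image.2 ⟨m - j, ?_, ?_⟩) hji
    · rw [Finset.mem_range]; omega
    · rw [Prod.mk.injEq]; omega

end LaurentCoeff

section FallingExpCoeff

open Topology

/-- The `j`-th term of the exponential series of `√(n * η) * w`, with the power `n ^ j` under the
square root replaced by a falling factorial. -/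
noncomputable def fallingExpCoeff (η : ℝ) (n : ℕ) (w : ℂ) (j : ℕ) : ℂ :=
  √(n.descFactorial j * η ^ j) * (w ^ j / j.factorial)

theorem fallingExpCoeff_of_lt (η : ℝ) {n j : ℕ} (h : n < j) (w : ℂ) :
    fallingExpCoeff η n w j = 0 := by
  simp [fallingExpCoeff, Nat.descFactorial_of_lt h]

theorem norm_fallingExpCoeff_le {η : ℝ} (hη : 0 ≤ η) {n : ℕ} {c : ℝ} (hc : n * η ≤ c) (w : ℂ)
    (j : ℕ) : ‖fallingExpCoeff η n w j‖ ≤ (√c * ‖w‖) ^ j / j.factorial := by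
  have hdesc : (n.descFactorial j : ℝ) * η ^ j ≤ c ^ j := calc
    (n.descFactorial j : ℝ) * η ^ j ≤ n ^ j * η ^ j := by
      gcongr
      exact_mod_cast Nat.descFactorial_le_pow n j
    _ ≤ c ^ j := by rw [← mul_pow]; gcongr
  rw [fallingExpCoeff, norm_mul, norm_div, norm_pow, norm_natCast, norm_real, mul_pow,
    mul_div_assoc, Real.norm_of_nonneg (Real.sqrt_nonneg _),
    ← sqrt_pow_of_nonneg ((by positivity : 0 ≤ n * η).trans hc)]
  gcongr

theorem tendsto_descFactorial_mul_pow {ι : Type*} {l : Filter ι} {η : ι → ℝ} {n : ι → ℕ} {c : ℝ}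
    (hη : Tendsto η l (𝓝 0)) (hn : Tendsto (fun q => n q * η q) l (𝓝 c)) (j : ℕ) :
    Tendsto (fun q => ((n q).descFactorial j : ℝ) * η q ^ j) l (𝓝 (c ^ j)) := by
  have hprod (q : ι) : ((n q).descFactorial j : ℝ) * η q ^ j =
      ∏ i ∈ Finset.range j, (n q * η q - i * η q) := by
    rw [← descPochhammer_eval_eq_descFactorial, descPochhammer_eval_eq_prod_range]
    simp only [← sub_mul, Finset.prod_mul_distrib, Finset.prod_const, Finset.card_range]
  have hfactor (i : ℕ) : Tendsto (fun q => n q * η q - i * η q) l (𝓝 c) := by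
    simpa using hn.sub (hη.const_mul (i : ℝ))
  simpa only [hprod, Finset.prod_const, Finset.card_range] using
    tendsto_finsetProd (Finset.range j) fun i _ => hfactor i

theorem tendsto_fallingExpCoeff {ι : Type*} {l : Filter ι} {η : ι → ℝ} {n : ι → ℕ} {c : ℝ}
    (hc : 0 ≤ c) (hη : Tendsto η l (𝓝 0)) (hn : Tendsto (fun q => n q * η q) l (𝓝 c)) (w : ℂ)
    (j : ℕ) : Tendsto (fun q => fallingExpCoeff (η q) (n q) w j) l
      (𝓝 ((√c * w) ^ j / j.factorial)) := by
  have hsqrt := (tendsto_descFactorial_mul_pow hη hn j).sqrt.ofReal.mul_const (w ^ j / j.factorial)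
  rwa [sqrt_pow_of_nonneg hc, ofReal_pow, ← mul_div_assoc, ← mul_pow] at hsqrt

theorem tendsto_laurentCoeff_fallingExpCoeff {ι : Type*} {l : Filter ι} {η : ι → ℝ} {m n : ι → ℕ}
    {c d : ℝ} (hc : 0 ≤ c) (hd : 0 ≤ d) (hη_nonneg : ∀ᶠ q in l, 0 ≤ η q) (hη : Tendsto η l (𝓝 0))
    (hm : Tendsto (fun q => m q * η q) l (𝓝 c)) (hn : Tendsto (fun q => n q * η q) l (𝓝 d))
    (p q : ℂ) (b : ℤ) :
    Tendsto (fun i =>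
        laurentCoeff (fallingExpCoeff (η i) (m i) p) (fallingExpCoeff (η i) (n i) q) b) l
      (𝓝 (laurentCoeff (fun j => (√c * p) ^ j / j.factorial)
        (fun j => (√d * q) ^ j / j.factorial) b)) := by
  refine tendsto_laurentCoeff (Real.summable_pow_div_factorial (√(c + 1) * ‖p‖))
    (Real.summable_pow_div_factorial (√(d + 1) * ‖q‖)) (tendsto_fallingExpCoeff hc hη hm p)
    (tendsto_fallingExpCoeff hd hη hn q) ?_ ?_ b
  · filter_upwards [hη_nonneg, hm.eventually_le_const (lt_add_one c)] with i hηi hmi j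
    exact norm_fallingExpCoeff_le hηi hmi p j
  · filter_upwards [hη_nonneg, hn.eventually_le_const (lt_add_one d)] with i hηi hni j
    exact norm_fallingExpCoeff_le hηi hni q j

end FallingExpCoeff

section ClosedForm

theorem choose_mul_descFactorial_div_sqrt {m n k : ℕ} (hm : k ≤ m) (hn : k ≤ n) :
    (√m.factorial)⁻¹ * (√n.factorial)⁻¹ * (n.choose k * m.descFactorial k) =
      √(m.descFactorial (m - k)) / (m - k).factorial *
        (√(n.descFactorial (n - k)) / (n - k).factorial) := by
  have sqrt_descFactorial {r : ℕ} (hr : k ≤ r) :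
      √(r.descFactorial (r - k)) = √r.factorial / √k.factorial := by
    have hfac : (k.factorial : ℝ) * r.descFactorial (r - k) = r.factorial := by
      exact_mod_cast Nat.sub_sub_self hr ▸ Nat.factorial_mul_descFactorial (Nat.sub_le r k)
    rw [← Real.sqrt_div (Nat.cast_nonneg _), ← hfac, mul_div_cancel_left₀ _ (by positivity)]
  have hdesc : ((m - k).factorial : ℝ) * m.descFactorial k = √m.factorial ^ 2 := by
    rw [Real.sq_sqrt (Nat.cast_nonneg _)]
    exact_mod_cast Nat.factorial_mul_descFactorial hm
  have hchoose : (n.choose k : ℝ) * √k.factorial ^ 2 * (n - k).factorial = √n.factorial ^ 2 := by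
    rw [Real.sq_sqrt (Nat.cast_nonneg _), Real.sq_sqrt (Nat.cast_nonneg _)]
    exact_mod_cast Nat.choose_mul_factorial_mul_factorial hn
  rw [sqrt_descFactorial hm, sqrt_descFactorial hn]
  field_simp
  linear_combination (n.choose k * √k.factorial ^ 2 * (n - k).factorial) * hdesc +
    √m.factorial ^ 2 * hchoose

theorem choose_mul_descFactorial_mul_pow_eq_fallingExpCoeff {m n k : ℕ} (hm : k ≤ m) (hn : k ≤ n)
    {η : ℝ} (hη : 0 ≤ η) (p q : ℂ) :
    ((√m.factorial)⁻¹ * (√n.factorial)⁻¹ : ℝ) * ((n.choose k * m.descFactorial k : ℂ) *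
        ((√η * p) ^ (m - k) * (√η * q) ^ (n - k))) =
      fallingExpCoeff η m p (m - k) * fallingExpCoeff η n q (n - k) := by
  have hcoeff := congrArg ofReal (choose_mul_descFactorial_div_sqrt hm hn)
  push_cast at hcoeff
  simp only [fallingExpCoeff, Real.sqrt_mul (Nat.cast_nonneg _), sqrt_pow_of_nonneg hη, mul_pow]
  push_cast
  linear_combination (√η ^ (m - k) * p ^ (m - k) * (√η ^ (n - k) * q ^ (n - k)) : ℂ) * hcoeff

theorem sum_choose_mul_descFactorial_mul_pow_eq_laurentCoeff (m n : ℕ) {η : ℝ} (hη : 0 ≤ η)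
    (p q : ℂ) :
    ((√m.factorial)⁻¹ * (√n.factorial)⁻¹ : ℝ) * ∑ k ∈ Finset.range (n + 1),
        (n.choose k * m.descFactorial k : ℂ) * ((√η * p) ^ (m - k) * (√η * q) ^ (n - k)) =
      laurentCoeff (fallingExpCoeff η m p) (fallingExpCoeff η n q) (m - n) := by
  have hsub : Finset.range (min m n + 1) ⊆ Finset.range (n + 1) :=
    Finset.range_subset_range.2 (by omega)
  rw [laurentCoeff_eq_sum_range (fun _ h => fallingExpCoeff_of_lt _ h _),
    ← Finset.sum_subset hsub, Finset.mul_sum]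
  · refine Finset.sum_congr rfl fun k hk => ?_
    rw [Finset.mem_range] at hk
    exact choose_mul_descFactorial_mul_pow_eq_fallingExpCoeff (by omega) (by omega) hη p q
  · intro k hkn hkm
    rw [Finset.mem_range] at hkn hkm
    simp [Nat.descFactorial_of_lt (show m < k by omega)]

theorem integral_cexp_mul_hermiteScaled_mul_hermiteScaled_eq_laurentCoeff (m n : ℕ) {ε : ℝ}
    (hε : 0 < ε) (x y : ℝ) :
    ∫ ξ : ℝ, cexp (I * ε * ξ * y) * (hermiteScaled m ε (ξ + x) : ℂ) * (hermiteScaled n ε ξ : ℂ) =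
      cexp (ε * ((I * y - x) ^ 2 / 4 - x ^ 2 / 2)) *
        laurentCoeff (fallingExpCoeff (ε / 2) m (I * y + x))
          (fallingExpCoeff (ε / 2) n (I * y - x)) (m - n) := by
  have hσ : √(2 * ε) = 2 * √(ε / 2) := by
    rw [show 2 * ε = 2 ^ 2 * (ε / 2) by ring, Real.sqrt_mul (by positivity),
      Real.sqrt_sq zero_le_two]
  have hsq : (√(ε / 2) : ℂ) ^ 2 = ε / 2 := mod_cast Real.sq_sqrt (by positivity : 0 ≤ ε / 2)
  have htilt : (√(2 * ε) / 2 * (I * y - x) : ℂ) = √(ε / 2) * (I * y - x) := by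
    rw [hσ]; push_cast; ring
  have hshift : (√(ε / 2) * (I * y - x) + √(2 * ε) * x : ℂ) = √(ε / 2) * (I * y + x) := by
    rw [hσ]; push_cast; ring
  have hexp : (Real.exp (-(ε * x ^ 2) / 2) * cexp ((√(ε / 2) * (I * y - x)) ^ 2 / 2) : ℂ) =
      cexp (ε * ((I * y - x) ^ 2 / 4 - x ^ 2 / 2)) := by
    push_cast
    rw [← Complex.exp_add, mul_pow, hsq]
    ring_nf
  rw [integral_cexp_mul_hermiteScaled_mul_hermiteScaled m n hε,
    tiltedGaussian_taylor_hermiteC_mul_hermiteC, htilt, hshift, ← hexp,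
    ← sum_choose_mul_descFactorial_mul_pow_eq_laurentCoeff m n (by positivity), ofReal_mul]
  ring

end ClosedForm

section FourierExponential

open ContinuousMap AddCircle NormedSpace MeasureTheory

/-- The `b`-th Fourier coefficient as a continuous linear functional on `C(UnitAddCircle, ℂ)`. -/
noncomputable def fourierCoeffL (b : ℤ) : C(UnitAddCircle, ℂ) →L[ℂ] ℂ :=
  innerSL ℂ (fourierLp 2 b) ∘L ContinuousMap.toLp 2 haarAddCircle ℂ

theorem fourierCoeffL_fourier (b n : ℤ) :
    fourierCoeffL b (fourier n) = if b = n then 1 else 0 :=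
  orthonormal_iff_ite.1 orthonormal_fourier b n

theorem fourier_mul_fourier {T : ℝ} (m n : ℤ) :
    (fourier m * fourier n : C(AddCircle T, ℂ)) = fourier (m + n) := by
  ext; simp

theorem fourier_pow {T : ℝ} (n : ℤ) (k : ℕ) :
    (fourier n : C(AddCircle T, ℂ)) ^ k = fourier (k * n) := by
  induction k with
  | zero => ext; simp
  | succ k ih => rw [pow_succ, ih, fourier_mul_fourier, Nat.cast_succ, add_one_mul]

theorem map_exp_add_eq_tsum {𝕜 A E : Type*} [RCLike 𝕜] [NormedCommRing A] [NormedAlgebra 𝕜 A]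
    [CompleteSpace A] [NormedAddCommGroup E] [NormedSpace 𝕜 E] (φ : A →L[𝕜] E) (u v : A) :
    φ (NormedSpace.exp (u + v)) = ∑' z : ℕ × ℕ,
      (z.1.factorial * z.2.factorial : 𝕜)⁻¹ • φ (u ^ z.1 * v ^ z.2) := by
  have hadd : NormedSpace.exp (u + v) = NormedSpace.exp u * NormedSpace.exp v := by
    let := NormedAlgebra.restrictScalars ℚ 𝕜 A
    exact NormedSpace.exp_add
  have hseries (w : A) : HasSum (fun n : ℕ => (n.factorial : 𝕜)⁻¹ • w ^ n) (NormedSpace.exp w) :=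
    exp_series_hasSum_exp' w
  have hsummable := summable_mul_of_summable_norm (norm_expSeries_summable' (𝕂 := 𝕜) u)
    (norm_expSeries_summable' (𝕂 := 𝕜) v)
  rw [hadd, ← (((hseries u).mul (hseries v) hsummable).mapL φ).tsum_eq]
  simp only [smul_mul_smul_comm, map_smul, mul_inv]

theorem fourierCoeffL_exp (p q : ℂ) (b : ℤ) :
    fourierCoeffL b (NormedSpace.exp (p • fourier 1 + q • fourier (-1))) =
      laurentCoeff (fun j => p ^ j / j.factorial) (fun j => q ^ j / j.factorial) b := by
  rw [map_exp_add_eq_tsum, laurentCoeff]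
  refine tsum_congr fun z => ?_
  rw [_root_.smul_pow, _root_.smul_pow, smul_mul_smul_comm, fourier_pow, fourier_pow,
    fourier_mul_fourier, map_smul, fourierCoeffL_fourier]
  simp only [mul_one, mul_neg_one, ← sub_eq_add_neg, eq_comm (a := b), smul_eq_mul, mul_ite,
    mul_zero]
  congr 1
  field_simp

theorem fourierCoeffL_pow_mul_pow (l₁ l₂ : ℕ) (b : ℤ) :
    fourierCoeffL b ((fourier 1 + fourier (-1)) ^ l₁ * (fourier 1 - fourier (-1)) ^ l₂) =
      altVandermonde l₁ l₂ b := by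
  have hmode {i j : ℕ} (hi : i ≤ l₁) (hj : j ≤ l₂) :
      fourier 1 ^ i * fourier (-1) ^ (l₁ - i) * (fourier 1 ^ j * fourier (-1) ^ (l₂ - j)) =
        (fourier (2 * ((i : ℤ) + j) - l₁ - l₂) : C(UnitAddCircle, ℂ)) := by
    simp only [fourier_pow, fourier_mul_fourier]
    congr 1
    push_cast [hi, hj]
    ring
  have hterm {i j : ℕ} (hi : i ≤ l₁) (hj : j ≤ l₂) :
      fourier 1 ^ i * fourier (-1) ^ (l₁ - i) * (l₁.choose i : C(UnitAddCircle, ℂ)) *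
        (fourier 1 ^ j * (-fourier (-1)) ^ (l₂ - j) * (l₂.choose j : C(UnitAddCircle, ℂ))) =
      ((-1) ^ (l₂ - j) * l₁.choose i * l₂.choose j : ℂ) •
        fourier (2 * ((i : ℤ) + j) - l₁ - l₂) := by
    rw [← hmode hi hj]
    ext t
    simp only [neg_pow (fourier (-1)), ContinuousMap.mul_apply, ContinuousMap.pow_apply,
      ContinuousMap.neg_apply, ContinuousMap.one_apply, ContinuousMap.natCast_apply,
      ContinuousMap.smul_apply, smul_eq_mul]
    ring
  rw [sub_eq_add_neg, add_pow, add_pow, Finset.sum_mul_sum, map_sum, altVandermonde, Int.cast_sum]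
  refine Finset.sum_congr rfl fun i hi => ?_
  rw [map_sum, Int.cast_sum]
  refine Finset.sum_congr rfl fun j hj => ?_
  rw [Finset.mem_range, Nat.lt_add_one_iff] at hi hj
  rw [hterm hi hj, map_smul, fourierCoeffL_fourier, smul_eq_mul]
  push_cast
  congr 2
  rw [eq_iff_iff]
  constructor <;> intro <;> linarith

theorem boundaryKernel_eq_laurentCoeff {a : ℝ} (ha : 0 ≤ a) (x y : ℝ) (b : ℤ) :
    boundaryKernel a x y b = laurentCoeff (fun j => (√(a / 4) * (I * y + x)) ^ j / j.factorial)
      (fun j => (√(a / 4) * (I * y - x)) ^ j / j.factorial) b := by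
  have hregroup : ((√(a / 4) * (I * y + x)) • fourier 1 + (√(a / 4) * (I * y - x)) • fourier (-1) :
      C(UnitAddCircle, ℂ)) = (√(a / 4) * (I * y)) • (fourier 1 + fourier (-1)) +
        (√(a / 4) * x : ℂ) • (fourier 1 - fourier (-1)) := by
    module
  rw [← fourierCoeffL_exp, hregroup, map_exp_add_eq_tsum, boundaryKernel]
  refine tsum_congr fun l => ?_
  rw [_root_.smul_pow, _root_.smul_pow, smul_mul_smul_comm, map_smul, fourierCoeffL_pow_mul_pow,
    Real.rpow_div_two_eq_sqrt _ (by positivity), ← Nat.cast_add, Real.rpow_natCast, ofReal_pow,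
    mul_pow, mul_pow, pow_add, smul_eq_mul, smul_eq_mul]
  ring

end FourierExponential

theorem kernel_boundary_limit_general {ι : Type*} {l : Filter ι} (b : ℤ) (a x y : ℝ) (ε : ι → ℝ)
    (m n : ι → ℕ) (hε_pos : ∀ᶠ q in l, 0 < ε q) (hε : Tendsto ε l (nhds 0))
    (hn : Tendsto (fun q => ε q * n q) l (nhds (a / 2)))
    (hmn : ∀ᶠ q in l, (m q : ℤ) = n q + b) :
    Tendsto (fun q => ∫ ξ : ℝ, cexp (I * ε q * ξ * y) * (hermiteScaled (m q) (ε q) (ξ + x) : ℂ) *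
      (hermiteScaled (n q) (ε q) ξ : ℂ)) l (nhds (boundaryKernel a x y b)) := by
  obtain rfl | hl := l.eq_or_neBot
  · exact tendsto_bot
  have ha : 0 ≤ a / 2 := ge_of_tendsto hn <| hε_pos.mono fun q hq => by positivity
  have hη : Tendsto (fun q => ε q / 2) l (nhds 0) := by simpa using hε.div_const 2
  have hnη : Tendsto (fun q => n q * (ε q / 2)) l (nhds (a / 4)) := by
    convert hn.div_const 2 using 2 <;> ring
  have hmη : Tendsto (fun q => m q * (ε q / 2)) l (nhds (a / 4)) := by
    have hshift : Tendsto (fun q => n q * (ε q / 2) + b * (ε q / 2)) l (nhds (a / 4)) := by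
      simpa using hnη.add (hη.const_mul (b : ℝ))
    refine hshift.congr' (hmn.mono fun q hq => ?_)
    rw [← add_mul]
    exact_mod_cast congrArg (fun k : ℤ => (k : ℝ) * (ε q / 2)) hq.symm
  have hexp : Tendsto (fun q => cexp (ε q * ((I * y - x) ^ 2 / 4 - x ^ 2 / 2))) l (nhds 1) := by
    simpa using (hε.ofReal.mul_const ((I * y - x) ^ 2 / 4 - x ^ 2 / 2 : ℂ)).cexp
  have hlim := hexp.mul (tendsto_laurentCoeff_fallingExpCoeff (by linarith) (by linarith)
    (hε_pos.mono fun q hq => by positivity) hη hmη hnη (I * y + x) (I * y - x) b)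
  rw [one_mul, ← boundaryKernel_eq_laurentCoeff (by linarith)] at hlim
  refine hlim.congr' ?_
  filter_upwards [hε_pos, hmn] with q hq hmnq
  rw [integral_cexp_mul_hermiteScaled_mul_hermiteScaled_eq_laurentCoeff _ _ hq, hmnq,
    add_sub_cancel_left]

/-- If `ε_q → 0`, `ε_q n_q → a/2` and `m_q := n_q + b ≥ 0` eventually, then
`∫ e^{iε_q ξ y} H_{m_q,ε_q}(ξ+x) H_{n_q,ε_q}(ξ) dξ → K(a,x,y,b)`. -/
theorem kernel_boundary_limit (b : ℤ) (a : ℝ) (ha : 0 ≤ a) (x y : ℝ)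
    (εq : ℕ → ℝ) (nq : ℕ → ℕ) (hεq : ∀ q, 0 < εq q)
    (h1 : Tendsto εq atTop (nhds 0))
    (h2 : Tendsto (fun q => εq q * nq q) atTop (nhds (a / 2)))
    (h3 : ∀ᶠ q in atTop, 0 ≤ (nq q : ℤ) + b) :
    Tendsto (fun q =>
        ∫ ξ : ℝ, Complex.exp (I * εq q * ξ * y) *
          (hermiteScaled ((nq q : ℤ) + b).toNat (εq q) (ξ + x) : ℂ) *
          (hermiteScaled (nq q) (εq q) ξ : ℂ))
      atTop (nhds (boundaryKernel a x y b)) := by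
  exact kernel_boundary_limit_general b a x y εq _ nq (.of_forall hεq) h1 h2
    (h3.mono fun _ => Int.toNat_of_nonneg)
end

section
/- For every a ≥ 0 and b ∈ ℤ, the function (x, y) ↦ K(a, x, y, b) is smooth on ℝ², and it satisfies the eigenvalue equation −(∂²_{xx} + ∂²_{yy}) K(a, x, y, b) = a · K(a, x, y, b) for all x, y ∈ ℝ. -/
open Complex

/-!
Put `c = √(a/4)` and let `eₙ` denote the `n`-th Fourier monomial on the circle. The integer
`F_{p,q}(b)` is the coefficient of `e_b` in `(e₁ + e₋₁)^p (e₁ - e₋₁)^q`, so `K(a,x,y,b)` is the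
`b`-th Fourier coefficient of `exp (x · c(e₁ - e₋₁) + y · ic(e₁ + e₋₁))`, that is, of
`θ ↦ exp (i√a (x sin θ + y cos θ))`. The kernel is thus a superposition of plane waves of wave
number `√a`. Exponentiating in the Banach algebra of continuous functions on the circle, on which
taking a Fourier coefficient is a continuous linear functional, replaces differentiation under the
sum: the Laplacian multiplies the exponential by
`(c(e₁ - e₋₁))² + (ic(e₁ + e₋₁))² = -4c² e₁e₋₁ = -a`.
-/

section Exponential

variable {𝕂 𝔸 F : Type*} [RCLike 𝕂] [NormedCommRing 𝔸] [NormedAlgebra 𝕂 𝔸] [CompleteSpace 𝔸]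
  [NormedAddCommGroup F] [NormedSpace 𝕂 F]

theorem hasDerivAt_clm_mul_exp_smul_add (L : 𝔸 →L[𝕂] F) (C A D : 𝔸) (t : 𝕂) :
    HasDerivAt (fun t : 𝕂 => L (C * NormedSpace.exp (t • A + D)))
      (L (C * A * NormedSpace.exp (t • A + D))) t := by
  have h_line : HasDerivAt (fun t : 𝕂 => t • A + D) A t := by
    simpa using ((hasDerivAt_id t).smul_const A).add_const D
  have h_exp := (hasFDerivAt_exp (𝕂 := 𝕂) (x := t • A + D)).comp_hasDerivAt t h_line
  rw [mul_assoc, mul_comm A]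
  exact L.hasFDerivAt.comp_hasDerivAt t (h_exp.const_mul C)

theorem deriv_deriv_clm_exp_smul_add (L : 𝔸 →L[𝕂] F) (A D : 𝔸) (t : 𝕂) :
    deriv (deriv fun t : 𝕂 => L (NormedSpace.exp (t • A + D))) t =
      L (A ^ 2 * NormedSpace.exp (t • A + D)) := by
  have h_deriv : deriv (fun t : 𝕂 => L (NormedSpace.exp (t • A + D))) =
      fun t => L (A * NormedSpace.exp (t • A + D)) := by
    funext s
    simpa only [one_mul] using (hasDerivAt_clm_mul_exp_smul_add L 1 A D s).deriv
  rw [h_deriv, sq]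
  exact (hasDerivAt_clm_mul_exp_smul_add L A A D t).deriv

theorem laplacian_clm_exp_smul_add_smul (L : 𝔸 →L[𝕂] F) (A B : 𝔸) (x y : 𝕂) :
    deriv (deriv fun t : 𝕂 => L (NormedSpace.exp (t • A + y • B))) x +
        deriv (deriv fun t : 𝕂 => L (NormedSpace.exp (x • A + t • B))) y =
      L ((A ^ 2 + B ^ 2) * NormedSpace.exp (x • A + y • B)) := by
  simp only [add_comm (x • A), deriv_deriv_clm_exp_smul_add, add_mul, map_add]

theorem contDiff_clm_exp_smul_add_smul {n : WithTop ℕ∞} (L : 𝔸 →L[𝕂] F) (A B : 𝔸) :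
    ContDiff 𝕂 n fun Z : 𝕂 × 𝕂 => L (NormedSpace.exp (Z.1 • A + Z.2 • B)) := by
  have h_exp : ContDiff 𝕂 n (NormedSpace.exp : 𝔸 → 𝔸) :=
    contDiff_iff_contDiffAt.2 fun x => (NormedSpace.exp_analytic (𝕂 := 𝕂) x).contDiffAt
  exact L.contDiff.comp (h_exp.comp (by fun_prop))

theorem clm_exp_smul_add_smul_eq_tsum (L : 𝔸 →L[𝕂] F) (A B : 𝔸) (z w : 𝕂) :
    L (NormedSpace.exp (z • A + w • B)) =
      ∑' ℓ : ℕ × ℕ, (z ^ ℓ.1 * w ^ ℓ.2 / ((ℓ.1.factorial : 𝕂) * ℓ.2.factorial)) •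
        L (A ^ ℓ.1 * B ^ ℓ.2) := by
  let _ : NormedAlgebra ℚ 𝔸 := NormedAlgebra.restrictScalars ℚ 𝕂 𝔸
  have h_summable := fun X : 𝔸 => NormedSpace.norm_expSeries_summable' (𝕂 := 𝕂) X
  rw [NormedSpace.exp_add_of_commute (Commute.all _ _), NormedSpace.exp_eq_tsum 𝕂,
    tsum_mul_tsum_of_summable_norm (h_summable _) (h_summable _),
    L.map_tsum (summable_mul_of_summable_norm (h_summable _) (h_summable _))]
  refine tsum_congr fun ℓ => ?_
  rw [smul_pow, smul_pow, smul_smul, smul_smul, smul_mul_smul_comm, map_smul]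
  congr 1
  field_simp

end Exponential

section AlternateVandermonde

variable {R : Type*} [CommRing R]

theorem addChar_one_add_mul_neg_one_pow (ψ : AddChar ℤ R) (c : R) (p : ℕ) :
    (ψ 1 + c * ψ (-1)) ^ p =
      ∑ i ∈ Finset.range (p + 1), c ^ (p - i) * p.choose i * ψ (2 * i - p) := by
  rw [add_pow]
  refine Finset.sum_congr rfl fun i hi => ?_
  have hip : i ≤ p := Finset.mem_range_succ_iff.1 hi
  have h_exponent : (2 * i - p : ℤ) = i • 1 + (p - i) • (-1) := by
    simp only [nsmul_eq_mul, Nat.cast_sub hip]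
    ring
  rw [h_exponent, ψ.map_add_eq_mul, ψ.map_nsmul_eq_pow, ψ.map_nsmul_eq_pow]
  ring

theorem map_addChar_pow_mul_pow_eq_altVandermonde {S : Type*} [Ring S] (ψ : AddChar ℤ R)
    (φ : R →+ S) (b : ℤ) (hφ : ∀ n, φ (ψ n) = if n = b then 1 else 0) (p q : ℕ) :
    φ ((ψ 1 + ψ (-1)) ^ p * (ψ 1 - ψ (-1)) ^ q) = altVandermonde p q b := by
  have h_plus := addChar_one_add_mul_neg_one_pow ψ 1 p
  have h_minus := addChar_one_add_mul_neg_one_pow ψ (-1) q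
  simp only [one_pow, one_mul, neg_one_mul, ← sub_eq_add_neg] at h_plus h_minus
  rw [h_plus, h_minus, Finset.sum_mul_sum, altVandermonde]
  simp only [map_sum, Int.cast_sum]
  refine Finset.sum_congr rfl fun i _ => Finset.sum_congr rfl fun j _ => ?_
  have h_term : p.choose i * ψ (2 * i - p) * ((-1) ^ (q - j) * q.choose j * ψ (2 * j - q)) =
      ((-1) ^ (q - j) * p.choose i * q.choose j : ℤ) • ψ (2 * (i + j) - p - q) := by
    rw [show (2 * (i + j) - p - q : ℤ) = 2 * i - p + (2 * j - q) by ring, ψ.map_add_eq_mul,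
      zsmul_eq_mul]
    push_cast
    ring
  have h_index : (2 * (i + j) - p - q : ℤ) = b ↔ (2 * (i + j) : ℤ) = b + p + q := by lia
  rw [h_term, map_zsmul, hφ, zsmul_eq_mul]
  simp only [h_index]
  push_cast
  rfl

end AlternateVandermonde

section Circle

variable {T : ℝ}

/-- The Fourier monomials, bundled as a character of `ℤ` with values in the algebra of continuous
functions on the circle, so that the laws of exponents for characters apply to them. -/
noncomputable def fourierAddChar : AddChar ℤ C(AddCircle T, ℂ) where
  toFun := fourier
  map_zero_eq_one' := ContinuousMap.ext fun _ => fourier_zero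
  map_add_eq_mul' _ _ := ContinuousMap.ext fun _ => fourier_add

/-- The `x`-frequency `2ic sin θ` of the plane wave of wave number `2c` in direction
`(sin θ, cos θ)`, as a function of the direction. The angle is `θ = 2πt/T` at the point `t` of the
circle. -/
noncomputable def xFrequency (c : ℂ) : C(AddCircle T, ℂ) :=
  c • (fourier 1 - fourier (-1))

/-- The `y`-frequency `2ic cos θ` of the plane wave of wave number `2c` in direction
`(sin θ, cos θ)`, with `θ` as in `xFrequency`. -/
noncomputable def yFrequency (c : ℂ) : C(AddCircle T, ℂ) :=
  (I * c) • (fourier 1 + fourier (-1))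

/-- The value at `(x, y)` of the plane wave `exp (2ic (x sin θ + y cos θ))`, as a function of its
direction `θ`: differentiating in `x` or `y` multiplies it by the corresponding frequency. -/
noncomputable def planeWave (c : ℂ) (x y : ℝ) : C(AddCircle T, ℂ) :=
  NormedSpace.exp (x • xFrequency c + y • yFrequency c)

theorem xFrequency_sq_add_yFrequency_sq (c : ℂ) :
    (xFrequency c ^ 2 + yFrequency c ^ 2 : C(AddCircle T, ℂ)) = (-(4 * c ^ 2)) • 1 := by
  have h_inv : (fourier 1 * fourier (-1) : C(AddCircle T, ℂ)) = 1 := by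
    have h := fourierAddChar (T := T).map_add_eq_mul 1 (-1)
    rw [add_neg_cancel, AddChar.map_zero_eq_one] at h
    exact h.symm
  have h_squares : ((fourier 1 + fourier (-1)) ^ 2 : C(AddCircle T, ℂ)) =
      (fourier 1 - fourier (-1)) ^ 2 + 4 • 1 := by
    rw [nsmul_eq_mul, ← h_inv]
    push_cast
    ring
  rw [xFrequency, yFrequency, smul_pow, smul_pow, mul_pow, I_sq, h_squares]
  module

variable [Fact (0 < T)]

/-- The `n`-th Fourier coefficient as a continuous linear functional on continuous functions. It is
encoded as the `L²` inner product with a Fourier monomial, which makes continuity automatic. -/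
noncomputable def fourierCoeffCLM (n : ℤ) : C(AddCircle T, ℂ) →L[ℂ] ℂ :=
  (innerSL ℂ (fourierLp 2 n)).comp (ContinuousMap.toLp 2 AddCircle.haarAddCircle ℂ)

theorem fourierCoeffCLM_apply (n : ℤ) (f : C(AddCircle T, ℂ)) :
    fourierCoeffCLM n f = fourierCoeff f n := by
  rw [← fourierCoeff_toLp, ← fourierBasis_repr, HilbertBasis.repr_apply_apply, coe_fourierBasis]
  rfl

theorem fourierCoeffCLM_fourier (b n : ℤ) :
    fourierCoeffCLM b (fourier n : C(AddCircle T, ℂ)) = if n = b then 1 else 0 := by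
  rw [fourierCoeffCLM_apply, fourierCoeff_fourier, Pi.single_apply]
  exact if_congr eq_comm rfl rfl

theorem fourierCoeffCLM_pow_mul_pow (b : ℤ) (p q : ℕ) :
    fourierCoeffCLM b ((fourier 1 + fourier (-1)) ^ p * (fourier 1 - fourier (-1)) ^ q :
      C(AddCircle T, ℂ)) = altVandermonde p q b :=
  map_addChar_pow_mul_pow_eq_altVandermonde fourierAddChar
    (fourierCoeffCLM b : C(AddCircle T, ℂ) →L[ℂ] ℂ).toLinearMap.toAddMonoidHom b
    (fourierCoeffCLM_fourier b) p q

theorem fourierCoeffCLM_planeWave_eq_tsum (b : ℤ) (c : ℂ) (x y : ℝ) :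
    fourierCoeffCLM b (planeWave c x y : C(AddCircle T, ℂ)) =
      ∑' ℓ : ℕ × ℕ, c ^ (ℓ.1 + ℓ.2) * (altVandermonde ℓ.1 ℓ.2 b : ℂ) *
        (I * y) ^ ℓ.1 * (x : ℂ) ^ ℓ.2 / ((ℓ.1.factorial : ℂ) * ℓ.2.factorial) := by
  have h_exponent : (x • xFrequency c + y • yFrequency c : C(AddCircle T, ℂ)) =
      (I * y * c) • (fourier 1 + fourier (-1)) + (x * c) • (fourier 1 - fourier (-1)) := by
    rw [add_comm, xFrequency, yFrequency, ← Complex.coe_smul, ← Complex.coe_smul, smul_smul,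
      smul_smul, mul_left_comm, mul_assoc]
  rw [planeWave, h_exponent, clm_exp_smul_add_smul_eq_tsum]
  refine tsum_congr fun ℓ => ?_
  rw [fourierCoeffCLM_pow_mul_pow, smul_eq_mul]
  ring

theorem laplacian_fourierCoeffCLM_planeWave (b : ℤ) (c : ℂ) (x y : ℝ) :
    deriv (deriv fun t : ℝ => fourierCoeffCLM b (planeWave c t y : C(AddCircle T, ℂ))) x +
        deriv (deriv fun t : ℝ => fourierCoeffCLM b (planeWave c x t : C(AddCircle T, ℂ))) y =
      -(4 * c ^ 2) * fourierCoeffCLM b (planeWave c x y : C(AddCircle T, ℂ)) := by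
  have h := laplacian_clm_exp_smul_add_smul
    ((fourierCoeffCLM b : C(AddCircle T, ℂ) →L[ℂ] ℂ).restrictScalars ℝ)
    (xFrequency c) (yFrequency c) x y
  rw [xFrequency_sq_add_yFrequency_sq, smul_mul_assoc, one_mul] at h
  exact h.trans ((fourierCoeffCLM b).map_smul _ _)

theorem contDiff_fourierCoeffCLM_planeWave {n : WithTop ℕ∞} (b : ℤ) (c : ℂ) :
    ContDiff ℝ n fun Z : ℝ × ℝ =>
      fourierCoeffCLM b (planeWave c Z.1 Z.2 : C(AddCircle T, ℂ)) :=
  contDiff_clm_exp_smul_add_smul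
    ((fourierCoeffCLM b : C(AddCircle T, ℂ) →L[ℂ] ℂ).restrictScalars ℝ)
    (xFrequency c) (yFrequency c)

end Circle

theorem boundaryKernel_eq_fourierCoeffCLM_planeWave {a : ℝ} (ha : 0 ≤ a) (x y : ℝ) (b : ℤ) :
    boundaryKernel a x y b =
      fourierCoeffCLM b (planeWave (√(a / 4)) x y : C(UnitAddCircle, ℂ)) := by
  rw [fourierCoeffCLM_planeWave_eq_tsum, boundaryKernel]
  refine tsum_congr fun ℓ => ?_
  have h_rpow : (a / 4) ^ (((ℓ.1 : ℝ) + ℓ.2) / 2) = √(a / 4) ^ (ℓ.1 + ℓ.2) := by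
    rw [Real.rpow_div_two_eq_sqrt _ (by positivity), ← Nat.cast_add, Real.rpow_natCast]
  rw [h_rpow, ofReal_pow]

/-- `(x,y) ↦ K(a,x,y,b)` is smooth and `−Δ_{x,y} K = a K`. -/
theorem boundaryKernel_laplacian (a : ℝ) (ha : 0 ≤ a) (b : ℤ) :
    ContDiff ℝ (⊤ : ℕ∞) (fun Z : ℝ × ℝ => boundaryKernel a Z.1 Z.2 b) ∧
    ∀ x y : ℝ,
      -(deriv (deriv (fun t : ℝ => boundaryKernel a t y b)) x +
          deriv (deriv (fun t : ℝ => boundaryKernel a x t b)) y) =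
        (a : ℂ) * boundaryKernel a x y b := by
  have h_wave_number : 4 * (√(a / 4) : ℂ) ^ 2 = a := by
    rw [← ofReal_pow, Real.sq_sqrt (by positivity)]
    push_cast
    ring
  simp only [boundaryKernel_eq_fourierCoeffCLM_planeWave ha]
  refine ⟨contDiff_fourierCoeffCLM_planeWave b _, fun x y => ?_⟩
  rw [laplacian_fourierCoeffCLM_planeWave, h_wave_number, neg_mul, neg_neg]
end

section
/- For every b ∈ ℤ and x, y ∈ ℝ, the function a ↦ K(a, x, y, b) is smooth on (0, ∞), and for all a > 0 it satisfies the differential identity (x² + y²) K(a, x, y, b) + 4a ∂²_{aa} K(a, x, y, b) + 4 ∂_a K(a, x, y, b) = (b²/a) K(a, x, y, b). -/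
open Complex

/-!
The integers `altVandermonde l₁ l₂ b` are the coefficients of
`(T + T⁻¹) ^ l₁ * (T - T⁻¹) ^ l₂`, so with `w = i y + x` and `v = i y - x` the kernel
`K(a, x, y, b)` is the coefficient of `T ^ b` in `exp (√a / 2 * (w T + v T⁻¹))`. Since
`w v = -(x² + y²)`, expanding the exponential shows that, as a function of `a`, this coefficient
is a constant multiple of `a ^ (|b| / 2) * ₀F₁(; |b| + 1; -(x² + y²) a / 4)`. The regularized
series `F_c = ₀F₁(; c; ·) / Γ(c)` is entire and satisfies `F_c' = F_{c+1}` and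
`F_c(z) = c F_{c+1}(z) + z F_{c+2}(z)`, which together give the radial equation.
-/

open Finset.HasAntidiagonal (antidiagonal mem_antidiagonal)

section Hypergeometric

theorem succ_mul_regularizedHGFunCoeff_succ (a b : Multiset ℂ) (n : ℕ) :
    (n + 1) * regularizedHGFunCoeff a b (n + 1) =
      a.prod * regularizedHGFunCoeff (a.map (· + 1)) (b.map (· + 1)) n := by
  have hnum : (a.map (ascPochhammer ℂ (n + 1)).eval).prod =
      a.prod * ((a.map (· + 1)).map (ascPochhammer ℂ n).eval).prod := by
    simp only [ascPochhammer_succ_left, Polynomial.eval_mul, Polynomial.eval_X,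
      Polynomial.eval_comp, Polynomial.eval_add, Polynomial.eval_one, Multiset.prod_map_mul,
      Multiset.map_id', Multiset.map_map, Function.comp_def]
  have hden : (b.map (Gamma <| · + (n + 1 : ℕ))).prod =
      ((b.map (· + 1)).map (Gamma <| · + n)).prod := by
    simp only [Multiset.map_map, Function.comp_def, Nat.cast_succ, add_assoc, add_comm (1 : ℂ)]
  have hn : (n + 1 : ℂ) ≠ 0 := n.cast_add_one_ne_zero
  rw [regularizedHGFunCoeff, regularizedHGFunCoeff, hnum, hden, Nat.factorial_succ]
  push_cast
  field_simp

theorem hasFPowerSeriesOnBall_regularizedHGFun {a b : Multiset ℂ} (h : a.card ≤ b.card) :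
    HasFPowerSeriesOnBall (regularizedHGFun a b) (regularizedHGFunSeries a b) 0 ⊤ := by
  have hr := radius_regularizedHGFunSeries_eq_top h
  exact hr ▸ (regularizedHGFunSeries a b).hasFPowerSeriesOnBall (hr ▸ ENNReal.zero_lt_top)

theorem hasSum_regularizedHGFun {a b : Multiset ℂ} (h : a.card ≤ b.card) (z : ℂ) :
    HasSum (fun n ↦ regularizedHGFunCoeff a b n * z ^ n) (regularizedHGFun a b z) := by
  simpa [regularizedHGFunSeries, mul_comm] using
    (hasFPowerSeriesOnBall_regularizedHGFun h).hasSum (y := z) (by simp)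

theorem hasDerivAt_regularizedHGFun {a b : Multiset ℂ} (h : a.card ≤ b.card) (z : ℂ) :
    HasDerivAt (regularizedHGFun a b)
      (a.prod * regularizedHGFun (a.map (· + 1)) (b.map (· + 1)) z) z := by
  have hF := hasFPowerSeriesOnBall_regularizedHGFun h
  have hderiv : HasSum (fun n : ℕ ↦ (n + 1) * regularizedHGFunCoeff a b (n + 1) * z ^ n)
      (deriv (regularizedHGFun a b) z) := by
    simpa [FormalMultilinearSeries.derivSeries_coeff_one, mul_comm] using
      (ContinuousLinearMap.apply ℂ ℂ (1 : ℂ)).hasSum (hF.fderiv.hasSum (y := z) (by simp))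
  simp only [succ_mul_regularizedHGFunCoeff_succ, mul_assoc] at hderiv
  rw [← hderiv.unique ((hasSum_regularizedHGFun (by simpa using h) z).mul_left a.prod)]
  exact (hF.differentiableOn.differentiableAt (by simp)).hasDerivAt

theorem regularizedHGFun_zero_singleton_eq_add (c z : ℂ) :
    regularizedHGFun 0 {c} z =
      c * regularizedHGFun 0 {c + 1} z + z * regularizedHGFun 0 {c + 2} z := by
  have coeff_eq (n : ℕ) :
      regularizedHGFunCoeff 0 {c} n = (c + n) * regularizedHGFunCoeff 0 {c + 1} n := by
    simp only [regularizedHGFunCoeff, Multiset.map_zero, Multiset.prod_zero,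
      Multiset.map_singleton, Multiset.prod_singleton, one_div, mul_inv]
    rw [one_div_Gamma_eq_self_mul_one_div_Gamma_add_one, add_right_comm c n 1]
    ring
  have hsum (d : ℂ) := hasSum_regularizedHGFun (a := 0) (b := {d}) (by simp) z
  have hshift : HasSum (fun n : ℕ ↦ n * regularizedHGFunCoeff 0 {c + 1} n * z ^ n)
      (z * regularizedHGFun 0 {c + 2} z) := by
    rw [← hasSum_nat_add_iff' 1]
    simp only [Finset.sum_range_one, Nat.cast_zero, zero_mul, sub_zero]
    refine ((hsum (c + 2)).mul_left z).congr_fun fun n ↦ ?_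
    have hcoeff := succ_mul_regularizedHGFunCoeff_succ 0 {c + 1} n
    simp only [Multiset.prod_zero, Multiset.map_zero, Multiset.map_singleton, one_mul,
      add_assoc, one_add_one_eq_two] at hcoeff
    rw [← hcoeff]
    push_cast
    ring
  refine (hsum c).unique ((((hsum (c + 1)).mul_left c).add hshift).congr_fun fun n ↦ ?_)
  rw [coeff_eq]
  ring

end Hypergeometric

section AltVandermonde

open LaurentPolynomial

variable {R : Type*} [CommRing R]

theorem C_mul_T_add_C_mul_T_neg_one_pow (w v : R) (n : ℕ) :
    (C w * T 1 + C v * T (-1)) ^ n = ∑ p ∈ antidiagonal n,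
      C (n.choose p.1 * w ^ p.1 * v ^ p.2) * T ((p.1 : ℤ) - p.2) := by
  rw [(Commute.all _ _).add_pow']
  refine Finset.sum_congr rfl fun p _ ↦ ?_
  rw [mul_pow, mul_pow, T_pow, T_pow, mul_one, mul_neg_one, T_sub, nsmul_eq_mul]
  simp only [map_mul, map_pow, map_natCast]
  ring

theorem coeff_C_mul_T (r : R) (k b : ℤ) :
    (C r * T k).coeff b = if k = b then r else 0 := by
  rw [← single_eq_C_mul_T, AddMonoidAlgebra.coeff_single, Finsupp.single_apply]

theorem coeff_T_add_pow_mul_T_sub_pow (l₁ l₂ : ℕ) (b : ℤ) :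
    ((T 1 + T (-1)) ^ l₁ * (T 1 - T (-1)) ^ l₂ : R[T;T⁻¹]).coeff b = altVandermonde l₁ l₂ b := by
  have hadd := C_mul_T_add_C_mul_T_neg_one_pow (1 : R) 1 l₁
  have hsub := C_mul_T_add_C_mul_T_neg_one_pow (1 : R) (-1) l₂
  simp only [map_neg, map_one, one_mul, neg_mul, ← sub_eq_add_neg, one_pow, mul_one] at hadd hsub
  rw [hadd, hsub, Finset.Nat.sum_antidiagonal_eq_sum_range_succ_mk,
    Finset.Nat.sum_antidiagonal_eq_sum_range_succ_mk, Finset.sum_mul_sum, altVandermonde]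
  simp only [AddMonoidAlgebra.coeff_sum, Finsupp.finsetSum_apply]
  push_cast
  refine Finset.sum_congr rfl fun i hi ↦ Finset.sum_congr rfl fun j hj ↦ ?_
  have hi : i ≤ l₁ := Finset.mem_range_succ_iff.1 hi
  have hj : j ≤ l₂ := Finset.mem_range_succ_iff.1 hj
  rw [mul_mul_mul_comm, ← map_mul, ← T_add, coeff_C_mul_T, mul_ite, mul_one, mul_zero]
  refine if_congr (by omega) (by ring) rfl

theorem sum_choose_mul_altVandermonde (u x : R) (n : ℕ) (b : ℤ) :
    ∑ p ∈ antidiagonal n, n.choose p.1 * altVandermonde p.1 p.2 b * u ^ p.1 * x ^ p.2 =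
      ∑ p ∈ antidiagonal n,
        if (p.1 : ℤ) - p.2 = b then n.choose p.1 * (u + x) ^ p.1 * (u - x) ^ p.2 else 0 := by
  have hsplit : C (u + x) * T 1 + C (u - x) * T (-1) =
      C u * (T 1 + T (-1)) + C x * (T 1 - T (-1)) := by
    rw [map_add, map_sub]; ring
  have hcoeff := congrArg (fun f : R[T;T⁻¹] ↦ f.coeff b)
    (C_mul_T_add_C_mul_T_neg_one_pow (u + x) (u - x) n)
  simp only [AddMonoidAlgebra.coeff_sum, Finsupp.finsetSum_apply, coeff_C_mul_T] at hcoeff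
  rw [← hcoeff, hsplit, (Commute.all _ _).add_pow', AddMonoidAlgebra.coeff_sum,
    Finsupp.finsetSum_apply]
  refine Finset.sum_congr rfl fun p _ ↦ ?_
  rw [← coeff_T_add_pow_mul_T_sub_pow]
  have hsmul : (n.choose p.1 • ((C u * (T 1 + T (-1))) ^ p.1 * (C x * (T 1 - T (-1))) ^ p.2)) =
      (n.choose p.1 * u ^ p.1 * x ^ p.2 : R) •
        ((T 1 + T (-1)) ^ p.1 * (T 1 - T (-1)) ^ p.2 : R[T;T⁻¹]) := by
    rw [smul_eq_C_mul, nsmul_eq_mul, mul_pow, mul_pow]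
    simp only [map_mul, map_pow, map_natCast]
    ring
  rw [hsmul, AddMonoidAlgebra.coeff_smul_apply, smul_eq_mul]
  ring

end AltVandermonde

theorem abs_altVandermonde_le (l₁ l₂ : ℕ) (b : ℤ) : |altVandermonde l₁ l₂ b| ≤ 2 ^ (l₁ + l₂) := by
  have hsum (l : ℕ) : (2 : ℤ) ^ l = ∑ i ∈ Finset.range (l + 1), (l.choose i : ℤ) :=
    mod_cast (Nat.sum_range_choose l).symm
  rw [pow_add, hsum, hsum, Finset.sum_mul_sum, altVandermonde]
  refine (Finset.abs_sum_le_sum_abs _ _).trans (Finset.sum_le_sum fun i _ ↦ ?_)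
  refine (Finset.abs_sum_le_sum_abs _ _).trans (Finset.sum_le_sum fun j _ ↦ ?_)
  split_ifs
  · simp [abs_mul]
  · simp only [mul_zero, abs_zero]
    positivity

section DoubleSeries

open scoped Nat

theorem tsum_eq_tsum_sum_antidiagonal {A α : Type*} [AddMonoid A] [Finset.HasAntidiagonal A]
    [AddCommMonoid α] [TopologicalSpace α] [ContinuousAdd α] [T3Space α] {f : A × A → α}
    (hf : Summable f) : ∑' p, f p = ∑' n, ∑ p ∈ antidiagonal n, f p := by
  let e := Finset.HasAntidiagonal.sigmaAntidiagonalEquivProd (A := A)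
  calc ∑' p, f p = ∑' q, f (e q) := (e.tsum_eq f).symm
    _ = ∑' n : A, ∑' p : antidiagonal n, f (p : A × A) :=
      (e.summable_iff.2 hf).tsum_sigma' fun n ↦ (hasSum_fintype _).summable
    _ = ∑' n, ∑ p ∈ antidiagonal n, f p := tsum_congr fun n ↦ Finset.tsum_subtype _ f

theorem summable_mul_pow_mul_pow_div_factorial {c : ℕ × ℕ → ℂ} {A : ℝ}
    (hc : ∀ p, ‖c p‖ ≤ A ^ (p.1 + p.2)) (w v : ℂ) :
    Summable fun p : ℕ × ℕ ↦ c p * w ^ p.1 * v ^ p.2 / (p.1 ! * p.2 !) := by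
  have hA : 0 ≤ A := by simpa using (norm_nonneg _).trans (hc (1, 0))
  refine .of_norm_bounded ((Real.summable_pow_div_factorial (A * ‖w‖)).mul_of_nonneg
    (Real.summable_pow_div_factorial (A * ‖v‖)) (fun n ↦ by positivity) fun n ↦ by positivity)
    fun p ↦ ?_
  simp only [norm_mul, norm_div, norm_pow, norm_natCast]
  calc ‖c p‖ * ‖w‖ ^ p.1 * ‖v‖ ^ p.2 / (p.1 ! * p.2 !)
      ≤ A ^ (p.1 + p.2) * ‖w‖ ^ p.1 * ‖v‖ ^ p.2 / (p.1 ! * p.2 !) := by gcongr; exact hc p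
    _ = _ := by rw [mul_pow, mul_pow, pow_add]; ring

/-- The coefficient of `T ^ b` in the formal expansion of `exp (w T + v T⁻¹)`. -/
noncomputable def expLaurentCoeff (w v : ℂ) (b : ℤ) : ℂ :=
  ∑' p : ℕ × ℕ, (if (p.1 : ℤ) - p.2 = b then 1 else 0) * w ^ p.1 * v ^ p.2 / (p.1 ! * p.2 !)

theorem expLaurentCoeff_neg (w v : ℂ) (b : ℤ) :
    expLaurentCoeff w v (-b) = expLaurentCoeff v w b := by
  rw [expLaurentCoeff, ← (Equiv.prodComm ℕ ℕ).tsum_eq]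
  refine tsum_congr fun p ↦ ?_
  have h : (p.2 : ℤ) - p.1 = -b ↔ (p.1 : ℤ) - p.2 = b := by omega
  simp only [Equiv.prodComm_apply, Prod.fst_swap, Prod.snd_swap, h]
  ring

theorem expLaurentCoeff_natCast (w v : ℂ) (k : ℕ) :
    expLaurentCoeff w v k = w ^ k * regularizedHGFun 0 {(k : ℂ) + 1} (w * v) := by
  have hinj : Function.Injective fun n : ℕ ↦ (n + k, n) := fun m n h ↦ (Prod.ext_iff.1 h).2
  rw [expLaurentCoeff, ← hinj.tsum_eq, ← (hasSum_regularizedHGFun (by simp) _).tsum_eq,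
    ← tsum_mul_left]
  · refine tsum_congr fun n ↦ ?_
    have hΓ : Gamma (k + 1 + n) = (n + k)! := by
      rw [← Gamma_nat_eq_factorial]; push_cast; congr 1; ring
    simp only [regularizedHGFunCoeff, Multiset.map_zero, Multiset.prod_zero,
      Multiset.map_singleton, Multiset.prod_singleton, hΓ, Nat.cast_add, add_sub_cancel_left,
      if_true]
    ring
  · rintro ⟨m, n⟩ hmn
    have hdiff : (m : ℤ) - n = k := by by_contra h; simp [h] at hmn
    exact ⟨n, Prod.ext (by dsimp only; omega) rfl⟩

theorem tsum_altVandermonde_eq_expLaurentCoeff (u x : ℂ) (b : ℤ) :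
    ∑' p : ℕ × ℕ, altVandermonde p.1 p.2 b * u ^ p.1 * x ^ p.2 / (p.1 ! * p.2 !) =
      expLaurentCoeff (u + x) (u - x) b := by
  have hF (p : ℕ × ℕ) : ‖(altVandermonde p.1 p.2 b : ℂ)‖ ≤ 2 ^ (p.1 + p.2) := by
    rw [norm_intCast]; exact_mod_cast abs_altVandermonde_le p.1 p.2 b
  have hδ (p : ℕ × ℕ) : ‖(if (p.1 : ℤ) - p.2 = b then 1 else 0 : ℂ)‖ ≤ 1 ^ (p.1 + p.2) := by
    split_ifs <;> simp
  rw [expLaurentCoeff,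
    tsum_eq_tsum_sum_antidiagonal (summable_mul_pow_mul_pow_div_factorial hF u x),
    tsum_eq_tsum_sum_antidiagonal (summable_mul_pow_mul_pow_div_factorial hδ (u + x) (u - x))]
  refine tsum_congr fun n ↦ ?_
  have hfac (z : ℂ) {p : ℕ × ℕ} (hp : p ∈ antidiagonal n) :
      z / (p.1 ! * p.2 !) = n.choose p.1 * z / n ! := by
    rw [← mem_antidiagonal.1 hp, Nat.cast_add_choose]
    have hne : ((p.1 + p.2)! : ℂ) ≠ 0 := mod_cast (p.1 + p.2).factorial_ne_zero
    field_simp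
  rw [Finset.sum_congr rfl fun p hp ↦ hfac _ hp, Finset.sum_congr rfl fun p hp ↦ hfac _ hp,
    ← Finset.sum_div, ← Finset.sum_div]
  simp only [ite_mul, one_mul, zero_mul, mul_ite, mul_zero, ← mul_assoc]
  rw [sum_choose_mul_altVandermonde]

end DoubleSeries

section RadialEquation

/-- The Frobenius solution `t ^ β * ₀F₁(; c; μ t) / Γ(c)`; for `c = 2 β + 1` it solves the
radial equation `t f'' + f' = (μ + β ^ 2 / t) f` on the positive half-line. -/
noncomputable def frobeniusSolution (β : ℝ) (c μ : ℂ) (t : ℝ) : ℂ :=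
  (t ^ β : ℝ) * regularizedHGFun 0 {c} (μ * t)

variable {t : ℝ}

theorem contDiffOn_frobeniusSolution (β : ℝ) (c μ : ℂ) (n : ℕ∞) :
    ContDiffOn ℝ n (frobeniusSolution β c μ) (Set.Ioi 0) := by
  have hrpow : ContDiffOn ℝ n (fun t : ℝ ↦ ((t ^ β : ℝ) : ℂ)) (Set.Ioi 0) :=
    ofRealCLM.contDiff.comp_contDiffOn
      (contDiffOn_id.rpow_const_of_ne fun t ht ↦ (Set.mem_Ioi.1 ht).ne')
  have hF : ContDiff ℂ n (regularizedHGFun 0 {c}) := Differentiable.contDiff fun z ↦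
    (hasDerivAt_regularizedHGFun (by simp) z).differentiableAt
  exact hrpow.mul ((hF.restrict_scalars ℝ).comp
    (contDiff_const.mul ofRealCLM.contDiff)).contDiffOn

theorem mul_frobeniusSolution (β : ℝ) (c μ : ℂ) (ht : 0 < t) :
    t * frobeniusSolution β c μ t = frobeniusSolution (β + 1) c μ t := by
  rw [frobeniusSolution, frobeniusSolution, Real.rpow_add_one ht.ne']
  push_cast
  ring

theorem frobeniusSolution_eq_add (β : ℝ) (c μ : ℂ) (ht : 0 < t) :
    frobeniusSolution β c μ t =
      c * frobeniusSolution β (c + 1) μ t + μ * frobeniusSolution (β + 1) (c + 2) μ t := by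
  rw [← mul_frobeniusSolution _ _ _ ht]
  simp only [frobeniusSolution]
  rw [regularizedHGFun_zero_singleton_eq_add]
  ring

theorem hasDerivAt_frobeniusSolution (β : ℝ) (c μ : ℂ) (ht : 0 < t) :
    HasDerivAt (frobeniusSolution β c μ)
      (β * frobeniusSolution (β - 1) c μ t + μ * frobeniusSolution β (c + 1) μ t) t := by
  have hrpow := (Real.hasDerivAt_rpow_const (p := β) (.inl ht.ne')).ofReal_comp
  have hF : HasDerivAt (fun t : ℝ ↦ regularizedHGFun 0 {c} (μ * t))
      (regularizedHGFun 0 {c + 1} (μ * t) * μ) t := by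
    simpa using ((hasDerivAt_regularizedHGFun (a := 0) (b := {c}) (by simp) (μ * t)).comp (t : ℂ)
      ((hasDerivAt_id (t : ℂ)).const_mul μ)).comp_ofReal
  refine (hrpow.mul hF).congr_deriv ?_
  simp only [frobeniusSolution]
  push_cast
  ring

theorem deriv_deriv_frobeniusSolution (β : ℝ) (c μ : ℂ) (ht : 0 < t) :
    deriv (deriv (frobeniusSolution β c μ)) t =
      β * (β - 1) * frobeniusSolution (β - 2) c μ t +
        2 * β * μ * frobeniusSolution (β - 1) (c + 1) μ t +
          μ ^ 2 * frobeniusSolution β (c + 2) μ t := by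
  have hderiv : deriv (frobeniusSolution β c μ) =ᶠ[nhds t] fun s ↦
      β * frobeniusSolution (β - 1) c μ s + μ * frobeniusSolution β (c + 1) μ s := by
    filter_upwards [Ioi_mem_nhds ht] with s hs using (hasDerivAt_frobeniusSolution β c μ hs).deriv
  rw [hderiv.deriv_eq, (((hasDerivAt_frobeniusSolution (β - 1) c μ ht).const_mul (β : ℂ)).fun_add
    ((hasDerivAt_frobeniusSolution β (c + 1) μ ht).const_mul μ)).deriv, sub_sub, add_assoc c,
    one_add_one_eq_two, one_add_one_eq_two]
  push_cast
  ring

theorem frobeniusSolution_radial_ODE {β : ℝ} {c : ℂ} (hc : c = 2 * β + 1) (μ : ℂ) (ht : 0 < t) :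
    t * deriv (deriv (frobeniusSolution β c μ)) t + deriv (frobeniusSolution β c μ) t =
      (μ + β ^ 2 / t) * frobeniusSolution β c μ t := by
  have ht' : (t : ℂ) ≠ 0 := mod_cast ht.ne'
  have lower (γ : ℝ) (d : ℂ) :
      frobeniusSolution (γ - 1) d μ t = frobeniusSolution γ d μ t / t := by
    rw [eq_div_iff ht', mul_comm, mul_frobeniusSolution _ _ _ ht, sub_add_cancel]
  have hrec := frobeniusSolution_eq_add β c μ ht
  rw [← mul_frobeniusSolution _ _ _ ht] at hrec
  rw [deriv_deriv_frobeniusSolution _ _ _ ht, (hasDerivAt_frobeniusSolution _ _ _ ht).deriv,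
    show β - 2 = β - 1 - 1 by ring, lower, lower, lower]
  field_simp
  linear_combination -(t : ℂ) * μ * hrec - t * μ * frobeniusSolution β (c + 1) μ t * hc

end RadialEquation

section BoundaryKernel

theorem boundaryKernel_eq_expLaurentCoeff {a : ℝ} (ha : 0 ≤ a) (x y : ℝ) (b : ℤ) :
    boundaryKernel a x y b =
      expLaurentCoeff (√a / 2 * (I * y + x)) (√a / 2 * (I * y - x)) b := by
  have hpow (p : ℕ × ℕ) : (a / 4) ^ (((p.1 : ℝ) + p.2) / 2) = (√a / 2) ^ (p.1 + p.2) := by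
    rw [Real.rpow_div_two_eq_sqrt _ (by positivity), Real.sqrt_div ha, ← Nat.cast_add,
      Real.rpow_natCast, show (4 : ℝ) = 2 ^ 2 by norm_num, Real.sqrt_sq zero_le_two]
  rw [mul_add, mul_sub, ← tsum_altVandermonde_eq_expLaurentCoeff, boundaryKernel]
  refine tsum_congr fun p ↦ ?_
  rw [hpow]
  push_cast
  ring

theorem expLaurentCoeff_natCast_sqrt {a : ℝ} (ha : 0 ≤ a) (w v : ℂ) (k : ℕ) :
    expLaurentCoeff (√a / 2 * w) (√a / 2 * v) k =
      (w / 2) ^ k * frobeniusSolution (k / 2) (k + 1) (w * v / 4) a := by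
  have hsq : (√a : ℂ) ^ 2 = a := mod_cast Real.sq_sqrt ha
  have harg : √a / 2 * w * (√a / 2 * v) = w * v / 4 * a := by
    linear_combination w * v / 4 * hsq
  rw [expLaurentCoeff_natCast, harg, frobeniusSolution, Real.rpow_div_two_eq_sqrt _ ha,
    Real.rpow_natCast]
  push_cast
  ring

theorem exists_boundaryKernel_eq_mul_frobeniusSolution (b : ℤ) (x y : ℝ) :
    ∃ A : ℂ, ∀ a : ℝ, 0 ≤ a → boundaryKernel a x y b =
      A * frobeniusSolution (b.natAbs / 2) (b.natAbs + 1) (-(x ^ 2 + y ^ 2) / 4) a := by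
  have hwv : (I * y + x) * (I * y - x) = -((x : ℂ) ^ 2 + y ^ 2) := by
    linear_combination (y : ℂ) ^ 2 * I_sq
  obtain ⟨k, rfl | rfl⟩ := b.eq_nat_or_neg
  · refine ⟨((I * y + x) / 2) ^ k, fun a ha ↦ ?_⟩
    rw [boundaryKernel_eq_expLaurentCoeff ha, expLaurentCoeff_natCast_sqrt ha, hwv,
      Int.natAbs_natCast]
  · refine ⟨((I * y - x) / 2) ^ k, fun a ha ↦ ?_⟩
    rw [boundaryKernel_eq_expLaurentCoeff ha, expLaurentCoeff_neg,
      expLaurentCoeff_natCast_sqrt ha, mul_comm, mul_comm (I * _ - _), hwv, Int.natAbs_neg,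
      Int.natAbs_natCast, mul_comm]

end BoundaryKernel

/-- `a ↦ K(a,x,y,b)` is smooth on `(0,∞)` and satisfies
`(x²+y²)K + 4a ∂²_{aa}K + 4 ∂_a K = (b²/a) K`. -/
theorem boundaryKernel_radial_ODE (b : ℤ) (x y : ℝ) :
    ContDiffOn ℝ (⊤ : ℕ∞) (fun t : ℝ => boundaryKernel t x y b) (Set.Ioi 0) ∧
    ∀ a : ℝ, 0 < a →
      ((x : ℂ) ^ 2 + (y : ℂ) ^ 2) * boundaryKernel a x y b +
          4 * (a : ℂ) * deriv (deriv (fun t : ℝ => boundaryKernel t x y b)) a +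
          4 * deriv (fun t : ℝ => boundaryKernel t x y b) a =
        ((b : ℂ) ^ 2 / (a : ℂ)) * boundaryKernel a x y b := by
  obtain ⟨A, hA⟩ := exists_boundaryKernel_eq_mul_frobeniusSolution b x y
  set β : ℝ := b.natAbs / 2 with hβ
  set μ : ℂ := -(x ^ 2 + y ^ 2) / 4 with hμ
  set f := frobeniusSolution β (b.natAbs + 1) μ
  have hEq : Set.EqOn (fun t ↦ boundaryKernel t x y b) (fun t ↦ A * f t) (Set.Ioi 0) :=
    fun t ht ↦ hA t (Set.mem_Ioi.1 ht).le
  refine ⟨(contDiffOn_const.mul (contDiffOn_frobeniusSolution _ _ _ _)).congr hEq, fun a ha ↦ ?_⟩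
  have hODE : a * deriv (deriv f) a + deriv f a = (μ + β ^ 2 / a) * f a :=
    frobeniusSolution_radial_ODE (by rw [hβ]; push_cast; ring) μ ha
  have hβ_sq : (4 * β ^ 2 : ℂ) = b ^ 2 := by
    rw [← Int.cast_pow, ← sq_abs b, Int.cast_pow, ← Nat.cast_natAbs, hβ]; push_cast; ring
  have hloc := hEq.eventuallyEq_of_mem (Ioi_mem_nhds ha)
  rw [hloc.deriv.deriv_eq, hloc.deriv_eq, hloc.eq_of_nhds]
  simp only [deriv_const_mul_field']
  linear_combination 4 * A * hODE + A * f a / a * hβ_sq - 4 * A * f a * hμ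
end
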